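/- Let N ≥ 2, let B ⊂ ℝ^N be a bounded radial domain (an open ball or open annulus centered at the origin) and set I = closure{|x| : x ∈ B}. Suppose f : [0,∞) × I × ℝ → ℝ, (t,r,u) ↦ f(t,r,u), is continuous in (t,r) and locally Lipschitz in u uniformly in (t,r) (for every K > 0 there is L = L(K) > 0 with |f(t,r,u₁) − f(t,r,u₂)| ≤ L|u₁ − u₂| for all (t,r) ∈ [0,∞) × I and u₁,u₂ ∈ [−K,K]), and that f(·,·,0) is bounded on [0,∞) × I. Let u ∈ C^{2,1}(B × (0,∞)) ∩ C(B̄ × [0,∞)) be a classical solution of u_t = Δu + f(t,|x|,u) in B × (0,∞) with u = 0 on ∂B × (0,∞) and u(·,0) = u₀ in B. Assume (U1): there is e ∈ S with u₀(x) ≥ u₀(σ_e(x)) for all x ∈ B(e) and u₀ ∘ σ_e ≢ u₀ on B(e); and (U2): sup_{t ≥ 0} ‖u(·,t)‖_{L^∞(B)} < ∞. Then there exists p ∈ S such that every element of the omega limit set ω(u) is foliated Schwarz symmetric with respect to p. -/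

import Mathlib

/-!
For a unit vector `e` the reflected difference `w = u - u ∘ σ_e` vanishes on the boundary of the half
domain `B(e)` and satisfies `|w_t - Δw| ≤ L |w|` there, with a constant `L` independent of `e`
(`reflSol_of_solution`).

The analytic core is `positivity_after_two`: if `w ≥ δ` on a fixed small ball at time `a`, and its
negative part at time `a` is smaller than a threshold depending only on `δ`, the ball and a positive
lower bound for `x₀·e` at its center `x₀`, then `w ≥ 0` at time `a + 2`. Harnack and Hopf type
estimates are replaced by explicit barriers and the weak maximum principle. Two supersolutions bound
the negative part of `w` first by a multiple of `x·e` and then by a multiple of `(x·e) g(|x|²)`, with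
`g(|x|²)` vanishing on `∂B`. Subsolutions supported in a moving ball, multiplied by `x·e`, carry the
positivity from the fixed ball to a ball at any prescribed point and dominate `(x·e) g(|x|²)` there.
The factor `x·e` makes these barriers vanish on `H(e)`, so the balls may cross the hyperplane.

Consequently, if a profile `z` satisfies the reflection inequality `z ∘ σ_e ≤ z` on `B(e)` without
being symmetric, and `u(·,t₀)` is close to `z`, then `u(·,t)` satisfies the reflection inequality for
all `t ≥ t₀ + 2` and all directions near `e` (`reflection_inequality_near`). Let `A` be the set of
directions for which every element of `ω(u)` satisfies the reflection inequality. It is closed, it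
contains a neighborhood of the direction `e₀` of (U1), and it is open at every `e ∈ A` for which some
element of `ω(u)` is asymmetric.

The axis is found through the first moment `V_z = ∫_B z(x) x dx` (`exists_axis`). For `e ∈ A` one has
`V_z·e ≥ 0`, with equality exactly when `z` is symmetric with respect to `H(e)`. If `V_z ≠ 0` for
some `z ∈ ω(u)`, then `A` is open at each of its points in the open hemisphere around `V_z`, hence
by connectedness it contains the closed hemisphere, and `p = V_z/|V_z|` works for all of `ω(u)`: two
points of equal norm are exchanged by a reflection. If all first moments vanish, every `z ∈ ω(u)` is
symmetric with respect to all directions near `e₀`, hence, bisecting angles, with respect to all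
directions, and any `p` works.
-/

open Set Metric Filter
open scoped RealInnerProductSpace

noncomputable section

variable {N : ℕ}

/-- Reflection through the hyperplane `H(e) = {x : ⟪x,e⟫ = 0}`:
`σ_e(x) = x - 2 (x·e) e`. -/
def reflHyp (e x : EuclideanSpace ℝ (Fin N)) : EuclideanSpace ℝ (Fin N) :=
  x - (2 * ⟪x, e⟫) • e

/-- The half domain `B(e) = {x ∈ B : x·e > 0}`. -/
def halfDom (B : Set (EuclideanSpace ℝ (Fin N))) (e : EuclideanSpace ℝ (Fin N)) :
    Set (EuclideanSpace ℝ (Fin N)) := {x ∈ B | 0 < ⟪x, e⟫}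

/-- A (bounded) radial domain: an open ball or an open annulus centered at the origin. -/
def IsRadialDomain (B : Set (EuclideanSpace ℝ (Fin N))) : Prop :=
  (∃ R, 0 < R ∧ B = Metric.ball 0 R) ∨
  (∃ r R, 0 < r ∧ r < R ∧ B = {x : EuclideanSpace ℝ (Fin N) | r < ‖x‖ ∧ ‖x‖ < R})

/-- `u` is foliated Schwarz symmetric on `D` with respect to the unit vector `p`:
`u(x) ≥ u(y)` whenever `|x| = |y|` and `x·p ≥ y·p`.  (This is equivalent to axial
symmetry with respect to `ℝp` together with monotonicity in the polar angle.) -/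
def FoliatedSchwarzOn (D : Set (EuclideanSpace ℝ (Fin N)))
    (u : EuclideanSpace ℝ (Fin N) → ℝ) (p : EuclideanSpace ℝ (Fin N)) : Prop :=
  ∀ x ∈ D, ∀ y ∈ D, ‖x‖ = ‖y‖ → ⟪y, p⟫ ≤ ⟪x, p⟫ → u y ≤ u x

/-- The omega limit set of a (bounded) solution `u = u(x,t)`: all continuous
functions `z` on `B̄` which are uniform limits on `B̄` of `u(·, tₙ)` for some
sequence `tₙ → ∞`. -/
def omegaLimitSet (B : Set (EuclideanSpace ℝ (Fin N)))
    (u : EuclideanSpace ℝ (Fin N) → ℝ → ℝ) : Set (EuclideanSpace ℝ (Fin N) → ℝ) :=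
  {z | ContinuousOn z (closure B) ∧ ∃ t : ℕ → ℝ, Tendsto t atTop atTop ∧
    ∀ ε > 0, ∃ n₀ : ℕ, ∀ n ≥ n₀, ∀ x ∈ closure B, |u x (t n) - z x| ≤ ε}

/-! ### Laplacians along coordinate lines and the weak maximum principle -/

/-- Euclidean `N`-space. -/
abbrev Eu (N : ℕ) : Type := EuclideanSpace ℝ (Fin N)

/-- `l` is the Laplacian of `g` at `x`, computed from one-dimensional second derivatives along the
coordinate lines through `x`.  This weak form is enough for the second derivative test, and is easy
to verify for explicit barriers. -/
def HasLap (g : Eu N → ℝ) (x : Eu N) (l : ℝ) : Prop :=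
  ∃ (d : Fin N → ℝ → ℝ) (c : Fin N → ℝ),
    (∀ i, (∀ᶠ s in nhds (0:ℝ),
        HasDerivAt (fun s : ℝ => g (x + s • EuclideanSpace.single i 1)) (d i s) s) ∧
      HasDerivAt (d i) (c i) 0) ∧ l = ∑ i, c i

lemma HasLap.add {g h : Eu N → ℝ} {x : Eu N} {l m : ℝ} (hg : HasLap g x l) (hh : HasLap h x m) :
    HasLap (fun y => g y + h y) x (l + m) := by
  obtain ⟨d, c, H, rfl⟩ := hg
  obtain ⟨d', c', H', rfl⟩ := hh
  refine ⟨fun i s => d i s + d' i s, fun i => c i + c' i, fun i => ⟨?_, ?_⟩, ?_⟩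
  · filter_upwards [(H i).1, (H' i).1] with s h1 h2 using h1.add h2
  · exact (H i).2.add (H' i).2
  · rw [Finset.sum_add_distrib]

lemma HasLap.const_mul {g : Eu N → ℝ} {x : Eu N} {l : ℝ} (k : ℝ) (hg : HasLap g x l) :
    HasLap (fun y => k * g y) x (k * l) := by
  obtain ⟨d, c, H, rfl⟩ := hg
  refine ⟨fun i s => k * d i s, fun i => k * c i, fun i => ⟨?_, ?_⟩, ?_⟩
  · filter_upwards [(H i).1] with s h1 using h1.const_mul k
  · exact (H i).2.const_mul k
  · rw [Finset.mul_sum]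

lemma HasLap.sub {g h : Eu N → ℝ} {x : Eu N} {l m : ℝ} (hg : HasLap g x l) (hh : HasLap h x m) :
    HasLap (fun y => g y - h y) x (l - m) := by
  have := hg.add (hh.const_mul (-1))
  convert this using 1
  · funext y; ring
  · ring

/-- Second derivative test in one variable. -/
lemma second_deriv_nonneg {g d : ℝ → ℝ} {c : ℝ}
    (hd : ∀ᶠ s in nhds (0:ℝ), HasDerivAt g (d s) s) (hc : HasDerivAt d c 0)
    (hmin : IsLocalMin g 0) : 0 ≤ c := by
  by_contra hneg
  push Not at hneg
  have hd0 : d 0 = 0 := hmin.hasDerivAt_eq_zero hd.self_of_nhds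
  have h1 : deriv g =ᶠ[nhds 0] d := by
    filter_upwards [hd] with s hs using hs.deriv
  have h2 : deriv (deriv g) 0 = c := by
    rw [h1.deriv_eq]; exact hc.deriv
  have hmax : IsLocalMax g 0 := isLocalMax_of_deriv_deriv_neg (by rw [h2]; exact hneg)
    (by rw [h1.self_of_nhds]; exact hd0) hd.self_of_nhds.continuousAt
  -- a point that is both a local minimum and a local maximum has locally constant values
  have hconst : g =ᶠ[nhds 0] fun _ => g 0 := by
    filter_upwards [hmin, hmax] with s h3 h4 using le_antisymm h4 h3
  have h5 : deriv (deriv g) 0 = 0 := by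
    have : deriv g =ᶠ[nhds 0] fun _ => 0 := by
      have := hconst.deriv
      simpa using this
    rw [this.deriv_eq]; simp
  linarith

lemma HasLap.nonneg_of_isLocalMin {g : Eu N → ℝ} {x : Eu N} {l : ℝ} (hg : HasLap g x l)
    (hmin : IsLocalMin g x) : 0 ≤ l := by
  obtain ⟨d, c, H, rfl⟩ := hg
  refine Finset.sum_nonneg fun i _ => second_deriv_nonneg (H i).1 (H i).2 ?_
  have hcont : ContinuousAt (fun s : ℝ => x + s • (EuclideanSpace.single i 1 : Eu N)) 0 := by
    fun_prop
  have : Tendsto (fun s : ℝ => x + s • (EuclideanSpace.single i 1 : Eu N)) (nhds 0) (nhds x) := by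
    have := hcont.tendsto
    simpa using this
  have h2 := this.eventually hmin
  simpa [IsLocalMin, IsMinFilter] using h2

/-- One-sided first derivative test. -/
lemma deriv_nonpos_of_left_min {f : ℝ → ℝ} {a t f' : ℝ} (hf : HasDerivAt f f' t) (hat : a < t)
    (hmin : ∀ s ∈ Icc a t, f t ≤ f s) : f' ≤ 0 := by
  have h1 := (hasDerivWithinAt_iff_tendsto_slope' (s := Iio t) (by simp)).1
    (hf.hasDerivWithinAt (s := Iio t))
  refine le_of_tendsto h1 ?_
  filter_upwards [Ioo_mem_nhdsLT hat] with s hs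
  rw [slope_def_field]
  have := hmin s ⟨hs.1.le, hs.2.le⟩
  exact div_nonpos_of_nonneg_of_nonpos (by linarith) (by linarith [hs.2])

/-- Weak maximum principle.  The differential inequality is required only where `h` is negative. -/
lemma weak_max_principle {K D : Set (Eu N)} (hK : IsCompact K) (hD : IsOpen D) (hDK : D ⊆ K)
    {h : Eu N → ℝ → ℝ} {a b L : ℝ}
    (hc : ContinuousOn (fun p : Eu N × ℝ => h p.1 p.2) (K ×ˢ Icc a b))
    (h0 : ∀ x ∈ K, 0 ≤ h x a)
    (hbd : ∀ x ∈ K, x ∉ D → ∀ t ∈ Ioc a b, 0 ≤ h x t)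
    (hpde : ∀ x ∈ D, ∀ t ∈ Ioc a b, h x t < 0 → ∃ ht l, HasDerivAt (h x) ht t ∧
      HasLap (fun y => h y t) x l ∧ L * h x t ≤ ht - l) :
    ∀ x ∈ K, ∀ t ∈ Icc a b, 0 ≤ h x t := by
  intro x₁ hx₁ t₁ ht₁
  by_contra hneg
  push Not at hneg
  obtain ⟨⟨x, t⟩, hxt, hmin⟩ := (hK.prod isCompact_Icc).exists_isMinOn ⟨(x₁, t₁), hx₁, ht₁⟩
    (f := fun p : Eu N × ℝ => Real.exp (-(L + 1) * p.2) * h p.1 p.2)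
    ((by fun_prop : Continuous fun p : Eu N × ℝ => Real.exp (-(L + 1) * p.2)).continuousOn.mul hc)
  obtain ⟨hxK, htI⟩ := hxt
  simp only at hxK htI
  have hmin' : ∀ y ∈ K, ∀ s ∈ Icc a b,
      Real.exp (-(L + 1) * t) * h x t ≤ Real.exp (-(L + 1) * s) * h y s :=
    fun y hy s hs => hmin (show (y, s) ∈ K ×ˢ Icc a b from ⟨hy, hs⟩)
  have hlt : h x t < 0 := by
    have h1 := hmin' x₁ hx₁ t₁ ht₁
    have h2 : Real.exp (-(L + 1) * t₁) * h x₁ t₁ < 0 :=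
      mul_neg_of_pos_of_neg (Real.exp_pos _) hneg
    by_contra h3
    push Not at h3
    have := mul_nonneg (Real.exp_pos (-(L + 1) * t)).le h3
    linarith
  have hta : a < t := by
    rcases eq_or_lt_of_le htI.1 with h1 | h1
    · subst h1; exact absurd (h0 x hxK) (not_le.2 hlt)
    · exact h1
  have hxD : x ∈ D := by
    by_contra h1
    exact absurd (hbd x hxK h1 t ⟨hta, htI.2⟩) (not_le.2 hlt)
  obtain ⟨ht, l, hdt, hl, hineq⟩ := hpde x hxD t ⟨hta, htI.2⟩ hlt
  have hl0 : 0 ≤ l := by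
    refine hl.nonneg_of_isLocalMin ?_
    filter_upwards [hD.mem_nhds hxD] with y hy
    exact le_of_mul_le_mul_left (hmin' y (hDK hy) t htI) (Real.exp_pos _)
  have hder : HasDerivAt (fun s => Real.exp (-(L + 1) * s) * h x s)
      (Real.exp (-(L + 1) * t) * (-(L + 1)) * h x t + Real.exp (-(L + 1) * t) * ht) t := by
    refine HasDerivAt.mul ?_ hdt
    have := ((hasDerivAt_id t).const_mul (-(L + 1))).exp
    simpa using this
  have h2 := deriv_nonpos_of_left_min hder hta
    (fun s hs => hmin' x hxK s ⟨hs.1, hs.2.trans htI.2⟩)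
  have h3 : Real.exp (-(L + 1) * t) * (ht - (L + 1) * h x t) ≤ 0 := by linarith
  have h4 : ht - (L + 1) * h x t ≤ 0 := by
    by_contra h5
    push Not at h5
    exact absurd h3 (not_le.2 (mul_pos (Real.exp_pos _) h5))
  linarith

/-! ### Laplacians of the barrier functions -/

lemma inner_line (e x : Eu N) (i : Fin N) (s : ℝ) :
    ⟪x + s • EuclideanSpace.single i (1:ℝ), e⟫ = ⟪x, e⟫ + s * e i := by
  rw [inner_add_left, inner_smul_left, EuclideanSpace.inner_single_left]; simp

lemma norm_sq_line (x ξ : Eu N) (i : Fin N) (s : ℝ) :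
    ‖x + s • EuclideanSpace.single i (1:ℝ) - ξ‖ ^ 2 =
      ‖x - ξ‖ ^ 2 + 2 * s * (x - ξ) i + s ^ 2 := by
  have : x + s • EuclideanSpace.single i (1:ℝ) - ξ = (x - ξ) + s • EuclideanSpace.single i (1:ℝ) := by
    abel
  rw [this, norm_add_sq_real, inner_smul_right, EuclideanSpace.inner_single_right, norm_smul]
  simp
  ring

lemma sum_mul_eq_inner (v w : Eu N) : ∑ i, v i * w i = ⟪v, w⟫ := by
  rw [PiLp.inner_apply]
  exact Finset.sum_congr rfl fun i _ => by simp [mul_comm]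

/-- The factor `⟪y, e⟫` turns the `N`-dimensional Laplacian of a function radial about a point of
the hyperplane `H(e)` into an `(N+2)`-dimensional one; off the hyperplane a first order term with
a sign remains. -/
lemma hasLap_inner_mul_radial (e ξ x : Eu N) {F F1 F2 : ℝ → ℝ}
    (hF : ∀ y, HasDerivAt F (F1 y) y) (hF1 : ∀ y, HasDerivAt F1 (F2 y) y) :
    HasLap (fun y => ⟪y, e⟫ * F (‖y - ξ‖ ^ 2)) x
      (⟪x, e⟫ * (4 * ‖x - ξ‖ ^ 2 * F2 (‖x - ξ‖ ^ 2) + 2 * N * F1 (‖x - ξ‖ ^ 2))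
        + 4 * ⟪x - ξ, e⟫ * F1 (‖x - ξ‖ ^ 2)) := by
  set Q := ‖x - ξ‖ ^ 2 with hQ
  have hq : ∀ (i : Fin N) (s : ℝ), HasDerivAt (fun s : ℝ => Q + 2 * s * (x - ξ) i + s ^ 2)
      (2 * (x - ξ) i + 2 * s) s := by
    intro i s
    have h1 := ((((hasDerivAt_id s).const_mul 2).mul_const ((x - ξ) i)).const_add Q).add
      ((hasDerivAt_id s).pow 2)
    exact h1.congr_deriv (by simp)
  have hs : ∀ (i : Fin N) (s : ℝ), HasDerivAt (fun s : ℝ => ⟪x, e⟫ + s * e i) (e i) s := by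
    intro i s
    simpa using ((hasDerivAt_id s).mul_const (e i)).const_add ⟪x, e⟫
  refine ⟨fun i s => e i * F (Q + 2 * s * (x - ξ) i + s ^ 2) + (⟪x, e⟫ + s * e i) *
      (F1 (Q + 2 * s * (x - ξ) i + s ^ 2) * (2 * (x - ξ) i + 2 * s)),
    fun i => 4 * F1 Q * ((x - ξ) i * e i) + ⟪x, e⟫ * (4 * F2 Q) * ((x - ξ) i * (x - ξ) i)
      + ⟪x, e⟫ * (2 * F1 Q), fun i => ⟨Eventually.of_forall fun s => ?_, ?_⟩, ?_⟩
  · simp only [inner_line, norm_sq_line]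
    exact (hs i s).mul ((hF _).comp s (hq i s))
  · have h1 : HasDerivAt (fun s : ℝ => 2 * (x - ξ) i + 2 * s) 2 0 := by
      simpa using ((hasDerivAt_id (0:ℝ)).const_mul 2).const_add (2 * (x - ξ) i)
    have h2 := (((hF _).comp (0:ℝ) (hq i 0)).const_mul (e i)).add
      ((hs i 0).mul (((hF1 _).comp (0:ℝ) (hq i 0)).mul h1))
    refine h2.congr_deriv ?_
    simp [hQ]
    ring
  · rw [Finset.sum_add_distrib, Finset.sum_add_distrib, ← Finset.mul_sum, ← Finset.mul_sum,
      sum_mul_eq_inner, sum_mul_eq_inner, real_inner_self_eq_norm_sq, ← hQ]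
    simp
    ring

lemma hasLap_comp_inner {e : Eu N} (he : ‖e‖ = 1) (x : Eu N) {G G1 G2 : ℝ → ℝ}
    (hG : ∀ y, HasDerivAt G (G1 y) y) (hG1 : ∀ y, HasDerivAt G1 (G2 y) y) :
    HasLap (fun y => G ⟪y, e⟫) x (G2 ⟪x, e⟫) := by
  have hs : ∀ (i : Fin N) (s : ℝ), HasDerivAt (fun s : ℝ => ⟪x, e⟫ + s * e i) (e i) s := by
    intro i s
    simpa using ((hasDerivAt_id s).mul_const (e i)).const_add ⟪x, e⟫
  refine ⟨fun i s => G1 (⟪x, e⟫ + s * e i) * e i, fun i => G2 ⟪x, e⟫ * (e i * e i),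
    fun i => ⟨Eventually.of_forall fun s => ?_, ?_⟩, ?_⟩
  · simp only [inner_line]
    exact (hG _).comp s (hs i s)
  · refine (((hG1 _).comp (0:ℝ) (hs i 0)).mul_const (e i)).congr_deriv ?_
    simp
    ring
  · rw [← Finset.mul_sum, sum_mul_eq_inner, real_inner_self_eq_norm_sq, he]; simp

/-! ### Reflected differences and the moving ball barrier -/

/-- What is used of `w(x,t) = u(x,t) - u(σ_e x,t)`: it is continuous, vanishes on `∂B` and on
`H(e)`, and satisfies `|w_t - Δw| ≤ L |w|` in `B × (0,∞)`. -/
structure ReflSol (B : Set (Eu N)) (e : Eu N) (L : ℝ) (w : Eu N → ℝ → ℝ) : Prop where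
  cont : ContinuousOn (fun p : Eu N × ℝ => w p.1 p.2) (closure B ×ˢ Ici 0)
  bdry : ∀ x ∈ frontier B, ∀ t, 0 < t → w x t = 0
  hyp : ∀ x, ⟪x, e⟫ = 0 → ∀ t, w x t = 0
  pde : ∀ x ∈ B, ∀ t, 0 < t → ∃ wt l, HasDerivAt (w x) wt t ∧ HasLap (fun y => w y t) x l ∧
    |wt - l| ≤ L * |w x t|

/-- A differentiable family of balls `B(ξ(τ), r(τ))`, `τ ∈ [0,1]`, not meeting `∂B`, with centers on
the side
`x·e ≥ 0` of `H(e)`, speeds at most `Λ` and radii in `[ρ₀, R]`. -/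
structure BallPath (B : Set (Eu N)) (e : Eu N) (R Λ ρ₀ : ℝ) (ξ ξ' : ℝ → Eu N) (r r' : ℝ → ℝ) :
    Prop where
  hξ : ∀ τ ∈ Icc (0:ℝ) 1, HasDerivAt ξ (ξ' τ) τ
  hr : ∀ τ ∈ Icc (0:ℝ) 1, HasDerivAt r (r' τ) τ
  hξ' : ∀ τ ∈ Icc (0:ℝ) 1, ‖ξ' τ‖ ≤ Λ
  hr' : ∀ τ ∈ Icc (0:ℝ) 1, |r' τ| ≤ Λ
  le_r : ∀ τ ∈ Icc (0:ℝ) 1, ρ₀ ≤ r τ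
  r_le : ∀ τ ∈ Icc (0:ℝ) 1, r τ ≤ R
  side : ∀ τ ∈ Icc (0:ℝ) 1, 0 ≤ ⟪ξ τ, e⟫
  inside : ∀ τ ∈ Icc (0:ℝ) 1, ∀ y ∈ frontier B, r τ ≤ ‖y - ξ τ‖

/-- The closed half domain. -/
def halfCl (B : Set (Eu N)) (e : Eu N) : Set (Eu N) := {x ∈ closure B | 0 ≤ ⟪x, e⟫}

lemma halfDom_subset_halfCl (B : Set (Eu N)) (e : Eu N) : halfDom B e ⊆ halfCl B e :=
  fun _ hx => ⟨subset_closure hx.1, hx.2.le⟩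

/-- The moving ball barrier `(x·e) e^{-λτ} (exp(α (r² - |x-ξ|²)) - 1)`: positive exactly in the part
of the ball `B(ξ,r)` with `x·e > 0`, and with linear growth away from the boundary of that set. -/
def ballBarrier (α lam : ℝ) (e ξ : Eu N) (r τ : ℝ) (x : Eu N) : ℝ :=
  ⟪x, e⟫ * (Real.exp (-lam * τ) * (Real.exp (α * (r ^ 2 - ‖x - ξ‖ ^ 2)) - 1))

/-- A nonnegative supersolution `Ψ_t - ΔΨ ≥ LΨ` in the half domain over the time interval
`[a, a+1]`. -/
structure SuperSol (B : Set (Eu N)) (e : Eu N) (L a : ℝ) (Ψ : Eu N → ℝ → ℝ) : Prop where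
  cont : Continuous fun p : Eu N × ℝ => Ψ p.1 p.2
  nonneg : ∀ x ∈ halfCl B e, ∀ t ∈ Icc a (a + 1), 0 ≤ Ψ x t
  pde : ∀ x ∈ halfDom B e, ∀ t ∈ Ioc a (a + 1), ∃ Ψt l, HasDerivAt (Ψ x) Ψt t ∧
    HasLap (fun y => Ψ y t) x l ∧ L * Ψ x t ≤ Ψt - l

lemma isOpen_halfDom {B : Set (Eu N)} (hB : IsOpen B) (e : Eu N) : IsOpen (halfDom B e) :=
  hB.inter (isOpen_lt continuous_const (continuous_id.inner continuous_const) :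
    IsOpen {x : Eu N | 0 < ⟪x, e⟫})

lemma isCompact_halfCl {B : Set (Eu N)} (hB : IsCompact (closure B)) (e : Eu N) :
    IsCompact (halfCl B e) :=
  hB.inter_right (isClosed_le continuous_const (continuous_id.inner continuous_const) :
    IsClosed {x : Eu N | 0 ≤ ⟪x, e⟫})

/-- Points of the closed half domain outside the open one lie on `∂B` or on `H(e)`. -/
lemma mem_frontier_or_inner_eq_zero {B : Set (Eu N)} (hB : IsOpen B) {e x : Eu N}
    (hx : x ∈ halfCl B e) (hx' : x ∉ halfDom B e) : x ∈ frontier B ∨ ⟪x, e⟫ = 0 := by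
  by_cases h : x ∈ B
  · right
    by_contra h2
    exact hx' ⟨h, lt_of_le_of_ne hx.2 (Ne.symm h2)⟩
  · left
    rw [hB.frontier_eq]; exact ⟨hx.1, h⟩

lemma ReflSol.eq_zero {B : Set (Eu N)} (hB : IsOpen B) {e : Eu N} {L : ℝ} {w : Eu N → ℝ → ℝ}
    (hw : ReflSol B e L w) {x : Eu N} (hx : x ∈ halfCl B e) (hx' : x ∉ halfDom B e) {t : ℝ}
    (ht : 0 < t) : w x t = 0 := by
  rcases mem_frontier_or_inner_eq_zero hB hx hx' with h | h
  · exact hw.bdry x h t ht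
  · exact hw.hyp x h t

/-- Comparison of a reflected difference with a nonpositive subsolution. -/
lemma ReflSol.neg_super_le {B : Set (Eu N)} (hB : IsOpen B) (hBc : IsCompact (closure B))
    {e : Eu N} {L : ℝ} {w : Eu N → ℝ → ℝ}
    (hw : ReflSol B e L w) {a : ℝ} (ha : 0 ≤ a) {Ψ : Eu N → ℝ → ℝ} (hΨ : SuperSol B e L a Ψ)
    (h0 : ∀ x ∈ halfCl B e, -Ψ x a ≤ w x a) :
    ∀ x ∈ halfCl B e, ∀ t ∈ Icc a (a + 1), 0 ≤ w x t + Ψ x t := by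
  refine weak_max_principle (L := L) (isCompact_halfCl hBc e) (isOpen_halfDom hB e)
    (halfDom_subset_halfCl B e) (h := fun x t => w x t + Ψ x t) ?_ ?_ ?_ ?_
  · refine (hw.cont.mono ?_).add hΨ.cont.continuousOn
    exact prod_mono (fun x hx => hx.1) (fun t ht => ha.trans ht.1)
  · intro x hx; linarith [h0 x hx]
  · intro x hx hx' t ht
    rw [hw.eq_zero hB hx hx' (ha.trans_lt ht.1)]
    linarith [hΨ.nonneg x hx t ⟨ht.1.le, ht.2⟩]
  · intro x hx t ht hneg
    obtain ⟨wt, l, h1, h2, h3⟩ := hw.pde x hx.1 t (ha.trans_lt ht.1)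
    obtain ⟨Ψt, m, h4, h5, h6⟩ := hΨ.pde x hx t ht
    refine ⟨_, _, h1.add h4, h2.add h5, ?_⟩
    have hΨ0 := hΨ.nonneg x (halfDom_subset_halfCl B e hx) t ⟨ht.1.le, ht.2⟩
    have hw0 : w x t < 0 := by linarith
    rw [abs_of_neg hw0] at h3
    have := (abs_le.1 h3).1
    nlinarith

/-- The moving ball barrier is a subsolution inside its ball, as soon as `α` is large in terms of
the speed and the minimal radius, and `lam` is large in terms of `α`.  Near the boundary of the ball
the term `4 α² |x-ξ|²` of the Laplacian wins; inside, the exponential decay in time does. -/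
lemma ballBarrier_subsolution {B : Set (Eu N)} {e : Eu N} {R Λ ρ₀ : ℝ} {ξ ξ' : ℝ → Eu N}
    {r r' : ℝ → ℝ} (hp : BallPath B e R Λ ρ₀ ξ ξ' r r') (hρ₀ : 0 < ρ₀) (hΛ : 0 ≤ Λ)
    {α lam L : ℝ} (hα : 0 < α) (hα' : 4 * R * Λ + 2 * N + 4 ≤ 4 * α * ρ₀ ^ 2)
    (hlam : L + 4 * α * (1 + α * R ^ 2) ≤ lam) {a t : ℝ} (ht : t - a ∈ Icc (0:ℝ) 1) {x : Eu N}
    (hx : 0 < ⟪x, e⟫) (hxr : 0 < r (t - a) ^ 2 - ‖x - ξ (t - a)‖ ^ 2) :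
    ∃ φt l, HasDerivAt (fun t => ballBarrier α lam e (ξ (t - a)) (r (t - a)) (t - a) x) φt t ∧
      HasLap (fun y => ballBarrier α lam e (ξ (t - a)) (r (t - a)) (t - a) y) x l ∧
      φt - l ≤ -L * ballBarrier α lam e (ξ (t - a)) (r (t - a)) (t - a) x := by
  set τ := t - a with hτ
  have hsub : HasDerivAt (fun t : ℝ => t - a) 1 t := (hasDerivAt_id t).sub_const a
  have hξ : HasDerivAt (fun t => ξ (t - a)) (ξ' τ) t := by
    exact ((hp.hξ τ ht).scomp t hsub).congr_deriv (by simp)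
  have hr : HasDerivAt (fun t => r (t - a)) (r' τ) t := by
    exact ((hp.hr τ ht).comp t hsub).congr_deriv (by simp)
  set y := r τ ^ 2 - ‖x - ξ τ‖ ^ 2 with hy
  set E := Real.exp (α * y) with hE
  set m := Real.exp (-lam * τ) with hm
  set yt := 2 * r τ * r' τ + 2 * ⟪x - ξ τ, ξ' τ⟫ with hyt
  have hyd : HasDerivAt (fun t => r (t - a) ^ 2 - ‖x - ξ (t - a)‖ ^ 2) yt t := by
    have h1 := (hξ.const_sub x).norm_sq
    have h2 := (hr.pow 2).sub h1
    refine h2.congr_deriv ?_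
    simp [hyt, ← hτ]
  have hmd : HasDerivAt (fun t => Real.exp (-lam * (t - a))) (m * -lam) t := by
    exact (hsub.const_mul (-lam)).exp.congr_deriv (by simp [hm, hτ])
  have hφt := (hmd.mul (((hyd.const_mul α).exp).sub_const 1)).const_mul ⟪x, e⟫
  have hF : ∀ q : ℝ, HasDerivAt (fun q => m * (Real.exp (α * (r τ ^ 2 - q)) - 1))
      (m * (Real.exp (α * (r τ ^ 2 - q)) * -α)) q := by
    intro q
    have := ((((hasDerivAt_id q).const_sub (r τ ^ 2)).const_mul α).exp.sub_const 1).const_mul m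
    simpa using this
  have hF1 : ∀ q : ℝ, HasDerivAt (fun q => m * (Real.exp (α * (r τ ^ 2 - q)) * -α))
      (m * (Real.exp (α * (r τ ^ 2 - q)) * α ^ 2)) q := by
    intro q
    have := ((((hasDerivAt_id q).const_sub (r τ ^ 2)).const_mul α).exp.mul_const (-α)).const_mul m
    refine this.congr_deriv ?_
    simp only [id]
    ring
  refine ⟨_, _, hφt, hasLap_inner_mul_radial e (ξ τ) x hF hF1, ?_⟩
  simp only [ballBarrier, ← hτ, ← hm, ← hy, ← hE]
  -- the two signs that make the estimate work
  have hside := hp.side τ ht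
  have hrR := hp.r_le τ ht
  have hρr := hp.le_r τ ht
  have hm0 : 0 < m := Real.exp_pos _
  have hE1 : 1 + α * y ≤ E := by rw [hE]; linarith [Real.add_one_le_exp (α * y)]
  have hxξ : ‖x - ξ τ‖ ≤ r τ := by
    refine le_of_sq_le_sq ?_ (by linarith)
    linarith
  have hR : 0 < R := by linarith
  have hyt' : yt ≤ 4 * R * Λ := by
    have h1 : ⟪x - ξ τ, ξ' τ⟫ ≤ R * Λ :=
      (real_inner_le_norm _ _).trans
        (mul_le_mul (hxξ.trans hrR) (hp.hξ' τ ht) (norm_nonneg _) hR.le)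
    have h2 : r τ * r' τ ≤ R * Λ :=
      (mul_le_mul_of_nonneg_left ((le_abs_self _).trans (hp.hr' τ ht)) (by linarith)).trans
        (mul_le_mul_of_nonneg_right hrR hΛ)
    rw [hyt]; linarith
  have hyR : y ≤ R ^ 2 := by
    have : r τ ^ 2 ≤ R ^ 2 := by gcongr; linarith
    nlinarith [sq_nonneg ‖x - ξ τ‖]
  have hQ : ρ₀ ^ 2 - y ≤ ‖x - ξ τ‖ ^ 2 := by
    have : ρ₀ ^ 2 ≤ r τ ^ 2 := by gcongr
    linarith
  set s := ⟪x, e⟫ with hs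
  set Q := ‖x - ξ τ‖ ^ 2 with hQdef
  have hinner : ⟪x - ξ τ, e⟫ ≤ s := by rw [inner_sub_left]; linarith
  have hE0 : 0 < E := Real.exp_pos _
  have hbr : -(lam - L) * (E - 1) + E * (α * yt) - 4 * Q * E * α ^ 2 + 2 * N * α * E
      + 4 * E * α ≤ 0 := by
    have hαy : 0 < α * y := mul_pos hα hxr
    have h1 : 4 * α * (1 + α * R ^ 2) * (E - 1) ≤ (lam - L) * (E - 1) :=
      mul_le_mul_of_nonneg_right (by linarith) (by linarith)
    have h2 : E * α * (yt + 2 * N + 4) ≤ E * α * (4 * α * ρ₀ ^ 2) :=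
      mul_le_mul_of_nonneg_left (by linarith) (by positivity)
    have h3 : 4 * E * α ^ 2 * (ρ₀ ^ 2 - y) ≤ 4 * E * α ^ 2 * Q :=
      mul_le_mul_of_nonneg_left hQ (by positivity)
    have h4 : 4 * α * ((1 + α * y) * (E - 1)) ≤ 4 * α * ((1 + α * R ^ 2) * (E - 1)) := by
      have : α * y ≤ α * R ^ 2 := mul_le_mul_of_nonneg_left hyR hα.le
      exact mul_le_mul_of_nonneg_left
        (mul_le_mul_of_nonneg_right (by linarith) (by linarith)) (by positivity)
    have h5 : 4 * α * (α * y * E) ≤ 4 * α * ((1 + α * y) * (E - 1)) :=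
      mul_le_mul_of_nonneg_left (by nlinarith) (by positivity)
    nlinarith
  have hms : 0 ≤ m * s := by positivity
  have h6 := mul_nonpos_of_nonneg_of_nonpos hms hbr
  have h7 : 4 * (m * E * α) * ⟪x - ξ τ, e⟫ ≤ 4 * (m * E * α) * s :=
    mul_le_mul_of_nonneg_left hinner (by positivity)
  nlinarith

lemma ballBarrier_nonpos {e x ξ : Eu N} {α lam r τ : ℝ} (hα : 0 < α) (hx : 0 ≤ ⟪x, e⟫)
    (h : r ^ 2 - ‖x - ξ‖ ^ 2 ≤ 0) : ballBarrier α lam e ξ r τ x ≤ 0 := by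
  refine mul_nonpos_of_nonneg_of_nonpos hx (mul_nonpos_of_nonneg_of_nonpos (Real.exp_pos _).le ?_)
  have : Real.exp (α * (r ^ 2 - ‖x - ξ‖ ^ 2)) ≤ 1 :=
    Real.exp_le_one_iff.2 (mul_nonpos_of_nonneg_of_nonpos hα.le h)
  linarith

/-- Comparison of a reflected difference with the moving ball barrier minus a supersolution. -/
lemma ReflSol.ballBarrier_sub_super_le {B : Set (Eu N)} (hB : IsOpen B)
    (hBc : IsCompact (closure B)) {e : Eu N} {L : ℝ} {w : Eu N → ℝ → ℝ} (hL : 0 ≤ L)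
    (hw : ReflSol B e L w) {a : ℝ} (ha : 0 ≤ a) {Ψ : Eu N → ℝ → ℝ} (hΨ : SuperSol B e L a Ψ)
    {R Λ ρ₀ : ℝ} {ξ ξ' : ℝ → Eu N}
    {r r' : ℝ → ℝ} (hp : BallPath B e R Λ ρ₀ ξ ξ' r r') (hρ₀ : 0 < ρ₀) (hΛ : 0 ≤ Λ)
    {α lam κ : ℝ} (hα : 0 < α) (hα' : 4 * R * Λ + 2 * N + 4 ≤ 4 * α * ρ₀ ^ 2)
    (hlam : L + 4 * α * (1 + α * R ^ 2) ≤ lam) (hκ : 0 < κ)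
    (h0 : ∀ x ∈ halfCl B e, -Ψ x a ≤ w x a)
    (h1 : ∀ x ∈ halfCl B e, κ * ballBarrier α lam e (ξ 0) (r 0) 0 x - Ψ x a ≤ w x a) :
    ∀ x ∈ halfCl B e, ∀ t ∈ Icc a (a + 1),
      0 ≤ w x t + Ψ x t - κ * ballBarrier α lam e (ξ (t - a)) (r (t - a)) (t - a) x := by
  have hnn := hw.neg_super_le hB hBc ha hΨ h0
  have hτ : ∀ t ∈ Icc a (a + 1), t - a ∈ Icc (0:ℝ) 1 := fun t ht =>
    ⟨by linarith [ht.1], by linarith [ht.2]⟩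
  refine weak_max_principle (L := L) (isCompact_halfCl hBc e) (isOpen_halfDom hB e)
    (halfDom_subset_halfCl B e) (h := fun x t => w x t + Ψ x t -
      κ * ballBarrier α lam e (ξ (t - a)) (r (t - a)) (t - a) x) ?_ ?_ ?_ ?_
  · refine ((hw.cont.mono ?_).add hΨ.cont.continuousOn).sub (continuousOn_const.mul ?_)
    · exact prod_mono (fun x hx => hx.1) (fun t ht => ha.trans ht.1)
    have hsub : ContinuousOn (fun p : Eu N × ℝ => p.2 - a) (halfCl B e ×ˢ Icc a (a + 1)) := by
      fun_prop
    have hξc : ContinuousOn (fun p : Eu N × ℝ => ξ (p.2 - a)) (halfCl B e ×ˢ Icc a (a + 1)) :=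
      (show ContinuousOn ξ (Icc 0 1) from fun s hs =>
        (hp.hξ s hs).continuousAt.continuousWithinAt).comp hsub fun p hp' => hτ _ hp'.2
    have hrc : ContinuousOn (fun p : Eu N × ℝ => r (p.2 - a)) (halfCl B e ×ˢ Icc a (a + 1)) :=
      (show ContinuousOn r (Icc 0 1) from fun s hs =>
        (hp.hr s hs).continuousAt.continuousWithinAt).comp hsub fun p hp' => hτ _ hp'.2
    unfold ballBarrier
    refine ContinuousOn.mul (continuousOn_fst.inner continuousOn_const) ?_
    refine ContinuousOn.mul (by fun_prop) (ContinuousOn.sub (ContinuousOn.rexp ?_) (by fun_prop))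
    exact continuousOn_const.mul
      ((hrc.pow 2).sub (((continuousOn_fst.sub hξc).norm).pow 2))
  · intro x hx
    have := h1 x hx
    simp only [sub_self]
    linarith
  · intro x hx hx' t ht
    have htI : t ∈ Icc a (a + 1) := ⟨ht.1.le, ht.2⟩
    have hφ : ballBarrier α lam e (ξ (t - a)) (r (t - a)) (t - a) x ≤ 0 := by
      rcases mem_frontier_or_inner_eq_zero hB hx hx' with h | h
      · refine ballBarrier_nonpos hα hx.2 ?_
        have h2 := hp.inside _ (hτ t htI) x h
        have h3 := hp.le_r _ (hτ t htI)
        have : r (t - a) ^ 2 ≤ ‖x - ξ (t - a)‖ ^ 2 := by gcongr; linarith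
        linarith
      · simp [ballBarrier, h]
    have := mul_nonpos_of_nonneg_of_nonpos hκ.le hφ
    linarith [hnn x hx t htI]
  · intro x hx t ht hneg
    have htI : t ∈ Icc a (a + 1) := ⟨ht.1.le, ht.2⟩
    have hnn' := hnn x (halfDom_subset_halfCl B e hx) t htI
    have hφ : 0 < ballBarrier α lam e (ξ (t - a)) (r (t - a)) (t - a) x := by
      by_contra h
      push Not at h
      have := mul_nonpos_of_nonneg_of_nonpos hκ.le h
      linarith
    have hy : 0 < r (t - a) ^ 2 - ‖x - ξ (t - a)‖ ^ 2 := by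
      by_contra h
      push Not at h
      exact absurd (ballBarrier_nonpos (lam := lam) (τ := t - a) hα hx.2.le h) (not_le.2 hφ)
    obtain ⟨φt, k, h4, h5, h6⟩ := ballBarrier_subsolution hp hρ₀ hΛ hα hα' hlam (hτ t htI) hx.2 hy
    obtain ⟨wt, l, h7, h8, h9⟩ := hw.pde x hx.1 t (ha.trans_lt ht.1)
    obtain ⟨Ψt, m, h10, h11, h12⟩ := hΨ.pde x hx t ht
    refine ⟨_, _, (h7.add h10).sub (h4.const_mul κ), (h8.add h11).sub (h5.const_mul κ), ?_⟩
    have hΨ0 := hΨ.nonneg x (halfDom_subset_halfCl B e hx) t htI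
    set φ := ballBarrier α lam e (ξ (t - a)) (r (t - a)) (t - a) x
    have h13 : κ * (φt - k) ≤ κ * (-L * φ) := mul_le_mul_of_nonneg_left h6 hκ.le
    have h14 := (abs_le.1 h9).1
    have h15 : w x t + |w x t| ≤ 2 * (κ * φ) := by
      rcases abs_cases (w x t) with ⟨h, _⟩ | ⟨h, _⟩ <;> rw [h]
      · linarith
      · have := mul_pos hκ hφ
        linarith
    have h16 := mul_le_mul_of_nonneg_left h15 hL
    linarith

/-! ### Positivity after time two -/

/-- The geometric input on `B`: a function `g(|x|²) ≥ 0` which is strictly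
superharmonic in dimension `N + 2`, and families of balls in `B` that move a small ball about `x₀`
to a position in which their boundary distance dominates `g` at a prescribed point `x`, with
constants that do not depend on `x` or on the reflection direction `e`. -/
structure BarrierData (B : Set (Eu N)) (R : ℝ) (g g1 g2 : ℝ → ℝ) : Prop where
  open_B : IsOpen B
  R_pos : 0 < R
  norm_le : ∀ x ∈ closure B, ‖x‖ ≤ R
  g_nonneg : ∀ x ∈ closure B, 0 ≤ g (‖x‖ ^ 2)
  hg : ∀ y, HasDerivAt g (g1 y) y
  hg1 : ∀ y, HasDerivAt g1 (g2 y) y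
  g_super : ∀ x ∈ B, 4 * ‖x‖ ^ 2 * g2 (‖x‖ ^ 2) + (2 * N + 4) * g1 (‖x‖ ^ 2) ≤ -1
  path : ∀ x₀ ∈ B, ∀ ρ₁ > 0, ∀ a₀ > 0, ∃ ρ Λ ρ₀ c : ℝ, ρ ≤ ρ₁ ∧ 0 ≤ Λ ∧ 0 < ρ₀ ∧ 0 < c ∧
    ∀ e : Eu N, ‖e‖ = 1 → a₀ ≤ ⟪x₀, e⟫ → ∀ x ∈ B, 0 < ⟪x, e⟫ → ∃ ξ ξ' r r',
      BallPath B e R Λ ρ₀ ξ ξ' r r' ∧ ξ 0 = x₀ ∧ r 0 = ρ ∧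
      c * g (‖x‖ ^ 2) ≤ r 1 ^ 2 - ‖x - ξ 1‖ ^ 2

lemma BarrierData.isCompact {B : Set (Eu N)} {R : ℝ} {g g1 g2 : ℝ → ℝ}
    (hb : BarrierData B R g g1 g2) : IsCompact (closure B) :=
  (isCompact_closedBall (0 : Eu N) R).of_isClosed_subset isClosed_closure
    fun x hx => by simpa using hb.norm_le x hx

lemma BarrierData.inner_le {B : Set (Eu N)} {R : ℝ} {g g1 g2 : ℝ → ℝ}
    (hb : BarrierData B R g g1 g2) {e : Eu N} (he : ‖e‖ = 1) {x : Eu N} (hx : x ∈ closure B) :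
    ⟪x, e⟫ ≤ R := by
  have := real_inner_le_norm x e
  rw [he, mul_one] at this
  exact this.trans (hb.norm_le x hx)

/-- The supersolution which improves a bound `ε` at time `a` to a bound `C ε (x·e)` at time
`a + 1`. -/
lemma superSol_first {B : Set (Eu N)} {R : ℝ} {g g1 g2 : ℝ → ℝ}
    (hb : BarrierData B R g g1 g2) {e : Eu N} (he : ‖e‖ = 1) {L ε : ℝ} (hε : 0 < ε) (a : ℝ) :
    SuperSol B e L a (fun x t => ε * (Real.exp (L * (t - a)) *
      (⟪x, e⟫ * (2 * R - ⟪x, e⟫) + (1 - (t - a))))) := by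
  refine ⟨?_, ?_, ?_⟩
  · have : Continuous fun p : Eu N × ℝ => ⟪p.1, e⟫ := continuous_fst.inner continuous_const
    fun_prop
  · intro x hx t ht
    have h1 := hb.inner_le he hx.1
    have h2 : 0 ≤ ⟪x, e⟫ * (2 * R - ⟪x, e⟫) :=
      mul_nonneg hx.2 (by linarith [hb.R_pos])
    have h3 : 0 ≤ 1 - (t - a) := by linarith [ht.2]
    positivity
  · intro x hx t ht
    have hsub : HasDerivAt (fun t : ℝ => t - a) 1 t := (hasDerivAt_id t).sub_const a
    have h1 := ((hsub.const_mul L).exp.mul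
      ((hsub.const_sub 1).const_add (⟪x, e⟫ * (2 * R - ⟪x, e⟫)))).const_mul ε
    have hG : ∀ y : ℝ, HasDerivAt (fun y => y * (2 * R - y) + (1 - (t - a))) (2 * R - 2 * y) y := by
      intro y
      have := ((hasDerivAt_id y).mul ((hasDerivAt_id y).const_sub (2 * R))).add_const
        (1 - (t - a))
      exact this.congr_deriv (by simp only [id]; ring)
    have hG1 : ∀ y : ℝ, HasDerivAt (fun y => 2 * R - 2 * y) (-2) y := by
      intro y
      simpa using ((hasDerivAt_id y).const_mul 2).const_sub (2 * R)
    have h2 := ((hasLap_comp_inner he x hG hG1).const_mul (Real.exp (L * (t - a)))).const_mul ε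
    refine ⟨_, _, h1, h2, ?_⟩
    have : 0 < ε * Real.exp (L * (t - a)) := mul_pos hε (Real.exp_pos _)
    nlinarith

/-- The supersolution which improves a bound `ε (x·e)` at time `a` to a bound `C ε (x·e) g(|x|²)` at
time `a + 1`. -/
lemma superSol_second {B : Set (Eu N)} {R : ℝ} {g g1 g2 : ℝ → ℝ}
    (hb : BarrierData B R g g1 g2) {e : Eu N} {L ε : ℝ} (hε : 0 < ε) (a : ℝ) :
    SuperSol B e L a (fun x t => ε * (Real.exp (L * (t - a)) *
      (⟪x, e⟫ * (g (‖x - 0‖ ^ 2) + (1 - (t - a)))))) := by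
  refine ⟨?_, ?_, ?_⟩
  · have : Continuous fun p : Eu N × ℝ => ⟪p.1, e⟫ := continuous_fst.inner continuous_const
    have hgc : Continuous g := continuous_iff_continuousAt.2 fun y => (hb.hg y).continuousAt
    fun_prop
  · intro x hx t ht
    have h2 := hb.g_nonneg x hx.1
    have h3 : 0 ≤ 1 - (t - a) := by linarith [ht.2]
    have h4 := hx.2
    simp only [sub_zero]
    positivity
  · intro x hx t ht
    have hsub : HasDerivAt (fun t : ℝ => t - a) 1 t := (hasDerivAt_id t).sub_const a
    have h1 := ((hsub.const_mul L).exp.mul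
      (((hsub.const_sub 1).const_add (g (‖x - 0‖ ^ 2))).const_mul ⟪x, e⟫)).const_mul ε
    have hF : ∀ y : ℝ, HasDerivAt (fun y => g y + (1 - (t - a))) (g1 y) y :=
      fun y => (hb.hg y).add_const _
    have h2 := ((hasLap_inner_mul_radial e 0 x hF hb.hg1).const_mul
      (Real.exp (L * (t - a)))).const_mul ε
    refine ⟨_, _, h1, h2, ?_⟩
    have h3 := hb.g_super x hx.1
    have h4 : 0 < ε * Real.exp (L * (t - a)) * ⟪x, e⟫ :=
      mul_pos (mul_pos hε (Real.exp_pos _)) hx.2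
    simp only [sub_zero]
    nlinarith

/-- If a reflected difference is at least `δ` on a small ball at some time, then it is nonnegative
two time units later, provided that its negative part at the initial time is small enough; the
threshold is uniform in the direction `e` and in the solution. -/
lemma positivity_after_two {B : Set (Eu N)} {R : ℝ} {g g1 g2 : ℝ → ℝ}
    (hb : BarrierData B R g g1 g2) {x₀ : Eu N} (hx₀ : x₀ ∈ B) {ρ₁ a₀ δ L : ℝ} (hρ₁ : 0 < ρ₁)
    (ha₀ : 0 < a₀) (hδ : 0 < δ) (hL : 0 ≤ L) :
    ∃ ε > 0, ∀ e : Eu N, ‖e‖ = 1 → a₀ ≤ ⟪x₀, e⟫ → ∀ w, ReflSol B e L w → ∀ a, 0 ≤ a →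
      (∀ x ∈ halfCl B e, -ε ≤ w x a) →
      (∀ x ∈ halfCl B e, ‖x - x₀‖ < ρ₁ → δ ≤ w x a) →
      ∀ x ∈ halfCl B e, 0 ≤ w x (a + 2) := by
  obtain ⟨ρ, Λ, ρ₀, c, hρρ₁, hΛ, hρ₀, hc, hpath⟩ := hb.path x₀ hx₀ ρ₁ hρ₁ a₀ ha₀
  have hR := hb.R_pos
  obtain ⟨α, hα, hα'⟩ : ∃ α : ℝ, 0 < α ∧ 4 * R * Λ + 2 * N + 4 ≤ 4 * α * ρ₀ ^ 2 := by
    refine ⟨(4 * R * Λ + 2 * N + 4) / (4 * ρ₀ ^ 2), by positivity, le_of_eq ?_⟩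
    field_simp
  set lam := L + 4 * α * (1 + α * R ^ 2) with hlam
  set κ := δ / (R * Real.exp (α * R ^ 2)) with hκdef
  have hκ : 0 < κ := by positivity
  set κ₂ := κ * Real.exp (-lam) with hκ₂def
  have hκ₂ : 0 < κ₂ := by positivity
  set ε := κ₂ * Real.exp (-lam) * α * c / (Real.exp L * (2 * R * Real.exp L)) with hεdef
  have hε : 0 < ε := by positivity
  refine ⟨ε, hε, ?_⟩
  intro e he hex w hw a ha hlow hball x hx
  by_cases hxD : x ∈ halfDom B e
  swap
  · exact (hw.eq_zero hb.open_B hx hxD (by linarith)).ge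
  obtain ⟨ξ, ξ', r, r', hp, hξ0, hr0, hend⟩ := hpath e he hex x hxD.1 hxD.2
  have h01 : (0:ℝ) ∈ Icc (0:ℝ) 1 := by simp
  have hρ0 : ρ₀ ≤ ρ := hr0 ▸ hp.le_r 0 h01
  have hρR : ρ ≤ R := hr0 ▸ hp.r_le 0 h01
  -- the ball stays put during the first unit of time
  have hp1 : BallPath B e R Λ ρ₀ (fun _ => x₀) (fun _ => 0) (fun _ => ρ) (fun _ => 0) :=
    ⟨fun τ _ => hasDerivAt_const τ x₀, fun τ _ => hasDerivAt_const τ ρ, fun _ _ => by simpa using hΛ,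
      fun _ _ => by simpa using hΛ, fun _ _ => hρ0, fun _ _ => hρR, fun _ _ => by linarith,
      fun _ _ y hy => by have := hp.inside 0 h01 y hy; rwa [hξ0, hr0] at this⟩
  have hΨ1 := superSol_first hb he hε a (L := L)
  have hnn : ∀ y ∈ halfCl B e, 0 ≤ ⟪y, e⟫ * (2 * R - ⟪y, e⟫) := fun y hy =>
    mul_nonneg hy.2 (by linarith [hb.inner_le he hy.1])
  have hstart : ∀ y ∈ halfCl B e, -(ε * (Real.exp (L * (a - a)) *
      (⟪y, e⟫ * (2 * R - ⟪y, e⟫) + (1 - (a - a))))) ≤ w y a := by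
    intro y hy
    have h1 := hlow y hy
    have h2 := mul_nonneg hε.le (hnn y hy)
    simp only [sub_self, mul_zero, Real.exp_zero, one_mul, sub_zero]
    linarith
  have hstart2 : ∀ y ∈ halfCl B e, κ * ballBarrier α lam e x₀ ρ 0 y - (ε * (Real.exp (L * (a - a)) *
      (⟪y, e⟫ * (2 * R - ⟪y, e⟫) + (1 - (a - a))))) ≤ w y a := by
    intro y hy
    by_cases hyx : 0 < ρ ^ 2 - ‖y - x₀‖ ^ 2
    · have h1 : ‖y - x₀‖ < ρ₁ := by
        refine lt_of_lt_of_le (lt_of_pow_lt_pow_left₀ 2 (by linarith) ?_) hρρ₁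
        linarith
      have h2 := hball y hy h1
      have h3 : ballBarrier α lam e x₀ ρ 0 y ≤ R * Real.exp (α * R ^ 2) := by
        have h4 : Real.exp (α * (ρ ^ 2 - ‖y - x₀‖ ^ 2)) ≤ Real.exp (α * R ^ 2) := by
          have : ρ ^ 2 ≤ R ^ 2 := by gcongr; linarith
          refine Real.exp_le_exp.2 (mul_le_mul_of_nonneg_left ?_ hα.le)
          linarith [sq_nonneg ‖y - x₀‖]
        have h5 : 1 ≤ Real.exp (α * (ρ ^ 2 - ‖y - x₀‖ ^ 2)) :=
          Real.one_le_exp (by positivity)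
        simp only [ballBarrier, mul_zero, Real.exp_zero, one_mul]
        exact mul_le_mul (hb.inner_le he hy.1) (by linarith) (by linarith) hR.le
      have h4 : κ * ballBarrier α lam e x₀ ρ 0 y ≤ δ := by
        refine (mul_le_mul_of_nonneg_left h3 hκ.le).trans (le_of_eq ?_)
        rw [hκdef]; field_simp
      have h5 := mul_nonneg hε.le (hnn y hy)
      simp only [sub_self, mul_zero, Real.exp_zero, one_mul, sub_zero]
      linarith
    · push Not at hyx
      have := mul_nonpos_of_nonneg_of_nonpos hκ.le
        (ballBarrier_nonpos (lam := lam) (τ := 0) hα hy.2 hyx)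
      linarith [hstart y hy]
  have hmem : a + 1 ∈ Icc a (a + 1) := ⟨by linarith, le_rfl⟩
  have hA := hw.neg_super_le hb.open_B hb.isCompact ha hΨ1 hstart
  have hB := hw.ballBarrier_sub_super_le hb.open_B hb.isCompact hL ha hΨ1 hp1 hρ₀ hΛ hα hα'
    hlam.ge hκ hstart hstart2
  -- second unit of time: the ball moves to its final position
  set ε₂ := 2 * R * Real.exp L * ε with hε₂def
  have hε₂ : 0 < ε₂ := by positivity
  have hΨ2 := superSol_second hb (e := e) (L := L) hε₂ (a + 1)
  have hbound : ∀ y ∈ halfCl B e, ε * (Real.exp (L * (a + 1 - a)) *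
      (⟪y, e⟫ * (2 * R - ⟪y, e⟫) + (1 - (a + 1 - a)))) ≤ ε₂ * (Real.exp (L * (a + 1 - (a + 1))) *
      (⟪y, e⟫ * (g (‖y - 0‖ ^ 2) + (1 - (a + 1 - (a + 1)))))) := by
    intro y hy
    have h1 : a + 1 - a = 1 := by ring
    have h2 := hb.g_nonneg y hy.1
    have h3 := hy.2
    have h4 : 0 ≤ ε₂ * (⟪y, e⟫ * g (‖y‖ ^ 2)) := by positivity
    have h5 : 0 ≤ ε * Real.exp L * ⟪y, e⟫ ^ 2 := by positivity
    simp only [h1, sub_self, mul_zero, Real.exp_zero, one_mul, sub_zero, mul_one, add_zero]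
    rw [mul_add, mul_add, hε₂def]
    rw [hε₂def] at h4
    nlinarith
  have hstart' : ∀ y ∈ halfCl B e, -(ε₂ * (Real.exp (L * (a + 1 - (a + 1))) *
      (⟪y, e⟫ * (g (‖y - 0‖ ^ 2) + (1 - (a + 1 - (a + 1))))))) ≤ w y (a + 1) := by
    intro y hy
    linarith [hbound y hy, hA y hy (a + 1) hmem]
  have hstart2' : ∀ y ∈ halfCl B e, κ₂ * ballBarrier α lam e (ξ 0) (r 0) 0 y -
      (ε₂ * (Real.exp (L * (a + 1 - (a + 1))) *
      (⟪y, e⟫ * (g (‖y - 0‖ ^ 2) + (1 - (a + 1 - (a + 1))))))) ≤ w y (a + 1) := by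
    intro y hy
    have h1 : κ₂ * ballBarrier α lam e (ξ 0) (r 0) 0 y =
        κ * ballBarrier α lam e x₀ ρ (a + 1 - a) y := by
      simp only [ballBarrier, hξ0, hr0, hκ₂def, add_sub_cancel_left, mul_one, mul_zero,
        Real.exp_zero]
      ring
    rw [h1]
    linarith [hbound y hy, hB y hy (a + 1) hmem]
  have hC := hw.ballBarrier_sub_super_le hb.open_B hb.isCompact hL (by linarith) hΨ2 hp hρ₀ hΛ hα
    hα' hlam.ge hκ₂ hstart' hstart2' x hx (a + 2) ⟨by linarith, by linarith⟩
  have ht : a + 2 - (a + 1) = 1 := by ring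
  simp only [ht, ballBarrier, sub_zero, sub_self, add_zero, mul_one] at hC
  set G := g (‖x‖ ^ 2) with hG
  have hG0 : 0 ≤ G := hb.g_nonneg x hx.1
  have h5 : α * (c * G) ≤ Real.exp (α * (r 1 ^ 2 - ‖x - ξ 1‖ ^ 2)) - 1 := by
    have h6 := Real.add_one_le_exp (α * (r 1 ^ 2 - ‖x - ξ 1‖ ^ 2))
    have h7 := mul_le_mul_of_nonneg_left hend hα.le
    linarith
  have h6 : κ₂ * (⟪x, e⟫ * (Real.exp (-lam) * (α * (c * G)))) ≤ κ₂ * (⟪x, e⟫ * (Real.exp (-lam) *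
      (Real.exp (α * (r 1 ^ 2 - ‖x - ξ 1‖ ^ 2)) - 1))) :=
    mul_le_mul_of_nonneg_left (mul_le_mul_of_nonneg_left
      (mul_le_mul_of_nonneg_left h5 (Real.exp_pos _).le) hx.2) hκ₂.le
  -- `ε` was chosen so that the two final bounds balance exactly
  have h7 : ε₂ * (Real.exp L * (⟪x, e⟫ * G)) = κ₂ * (⟪x, e⟫ * (Real.exp (-lam) * (α * (c * G)))) := by
    have : ε₂ * Real.exp L = κ₂ * Real.exp (-lam) * α * c := by
      rw [hε₂def, hεdef]
      field_simp
    linear_combination (⟪x, e⟫ * G) * this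
  linarith

/-! ### Barrier data for balls and annuli -/

lemma barrierData_ball {R : ℝ} (hR : 0 < R) :
    BarrierData (ball (0 : Eu N) R) R (fun y => (R ^ 2 - y) / (2 * N + 4))
      (fun _ => -1 / (2 * N + 4)) (fun _ => 0) := by
  have hN : (0:ℝ) < 2 * N + 4 := by positivity
  have hcl : ∀ x ∈ closure (ball (0 : Eu N) R), ‖x‖ ≤ R := fun x hx => by
    simpa using closure_ball_subset_closedBall hx
  have hfr : ∀ x ∈ frontier (ball (0 : Eu N) R), R ≤ ‖x‖ := fun x hx => by
    rw [isOpen_ball.frontier_eq] at hx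
    simpa using hx.2
  refine ⟨isOpen_ball, hR, hcl, ?_, ?_, ?_, ?_, ?_⟩
  · intro x hx
    have := hcl x hx
    have : ‖x‖ ^ 2 ≤ R ^ 2 := by gcongr
    exact div_nonneg (by linarith) hN.le
  · intro y
    simpa using ((hasDerivAt_id y).const_sub (R ^ 2)).div_const (2 * N + 4 : ℝ)
  · intro y; exact hasDerivAt_const y _
  · intro x _
    have : (2 * N + 4 : ℝ) * (-1 / (2 * N + 4)) = -1 := by field_simp
    rw [this]; simp
  · intro x₀ hx₀ ρ₁ hρ₁ a₀ ha₀
    have hx₀R : ‖x₀‖ < R := by simpa using hx₀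
    have hρ : 0 < min ρ₁ (R - ‖x₀‖) := lt_min hρ₁ (by linarith)
    have hρ2 := min_le_right ρ₁ (R - ‖x₀‖)
    refine ⟨min ρ₁ (R - ‖x₀‖), R, min ρ₁ (R - ‖x₀‖), 2 * N + 4, min_le_left _ _, hR.le, hρ, hN, ?_⟩
    set ρ := min ρ₁ (R - ‖x₀‖)
    have hx0 := norm_nonneg x₀
    intro e he hex x hx hxe
    refine ⟨fun τ => (1 - τ) • x₀, fun _ => (-1 : ℝ) • x₀, fun τ => (1 - τ) * ρ + τ * R,
      fun _ => R - ρ, ⟨?_, ?_, ?_, ?_, ?_, ?_, ?_, ?_⟩, ?_, ?_, ?_⟩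
    · intro τ _
      exact ((hasDerivAt_id τ).const_sub 1).smul_const x₀
    · intro τ _
      have := (((hasDerivAt_id τ).const_sub 1).mul_const ρ).add ((hasDerivAt_id τ).mul_const R)
      exact this.congr_deriv (by ring)
    · intro τ _
      rw [norm_smul]; simp; exact hx₀R.le
    · intro τ _
      rw [abs_of_nonneg (by linarith)]; linarith
    · intro τ hτ
      nlinarith [hτ.1, hτ.2]
    · intro τ hτ
      nlinarith [hτ.1, hτ.2]
    · intro τ hτ
      simp only [inner_smul_left]
      exact mul_nonneg (by simpa using hτ.2) (by linarith)
    · intro τ hτ y hy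
      have h1 := norm_sub_norm_le y ((1 - τ) • x₀)
      rw [norm_smul, Real.norm_of_nonneg (by linarith [hτ.2])] at h1
      have h2 := hfr y hy
      have h3 : (1 - τ) * ρ ≤ (1 - τ) * (R - ‖x₀‖) :=
        mul_le_mul_of_nonneg_left hρ2 (by linarith [hτ.2])
      change (1 - τ) * ρ + τ * R ≤ ‖y - (1 - τ) • x₀‖
      nlinarith
    · simp
    · simp
    · simp only [sub_self, zero_smul, sub_zero, zero_mul, one_mul, zero_add]
      exact le_of_eq (by field_simp)

/-- The point at time `τ` of the segment from `p` to `q`, projected radially to the unit sphere. -/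
def dirPath (p q : Eu N) (τ : ℝ) : Eu N := ‖(1 - τ) • p + τ • q‖⁻¹ • ((1 - τ) • p + τ • q)

lemma dirPath_hasDerivAt (p q : Eu N) (τ : ℝ) {k : ℝ} (hk : 0 < k)
    (hp : ‖p‖ = 1) (hq : ‖q‖ = 1) (h : k ≤ ‖(1 - τ) • p + τ • q‖) :
    ∃ v, HasDerivAt (dirPath p q) v τ ∧ ‖v‖ ≤ 4 / k := by
  set A : ℝ → Eu N := fun τ => (1 - τ) • p + τ • q with hA
  set n := ‖A τ‖ with hn
  have hkn : k ≤ n := h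
  have hn0 : 0 < n := by linarith
  have hAd : HasDerivAt A (q - p) τ := by
    have := (((hasDerivAt_id τ).const_sub 1).smul_const p).add ((hasDerivAt_id τ).smul_const q)
    refine this.congr_deriv ?_
    simp; abel
  have hnd : HasDerivAt (fun τ => ‖A τ‖) (⟪A τ, q - p⟫ / n) τ := by
    have h1 := hAd.norm_sq.sqrt (by positivity)
    have h2 : (fun τ => Real.sqrt (‖A τ‖ ^ 2)) = fun τ => ‖A τ‖ := by
      funext s; exact Real.sqrt_sq (norm_nonneg _)
    rw [h2] at h1
    refine h1.congr_deriv ?_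
    rw [Real.sqrt_sq (norm_nonneg _), ← hn]
    field_simp
  have hd := (hnd.inv hn0.ne').smul hAd
  refine ⟨_, hd, ?_⟩
  have hqp : ‖q - p‖ ≤ 2 := by
    have := norm_sub_le q p
    rw [hp, hq] at this; linarith
  have hin : |⟪A τ, q - p⟫| ≤ n * 2 :=
    (abs_real_inner_le_norm _ _).trans (mul_le_mul_of_nonneg_left hqp hn0.le)
  have h1 : ‖n⁻¹ • (q - p)‖ ≤ 2 / n := by
    rw [norm_smul, norm_inv, Real.norm_of_nonneg hn0.le, inv_mul_eq_div]
    gcongr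
  have h2 : ‖(-(⟪A τ, q - p⟫ / n) / n ^ 2) • A τ‖ ≤ 2 / n := by
    rw [norm_smul, ← hn, norm_div, norm_neg, norm_div, Real.norm_eq_abs, Real.norm_of_nonneg hn0.le,
      norm_pow, Real.norm_of_nonneg hn0.le]
    have : |⟪A τ, q - p⟫| / n / n ^ 2 * n = |⟪A τ, q - p⟫| / n / n := by field_simp
    rw [this]
    gcongr
    rw [div_le_iff₀ hn0]; linarith
  refine (norm_add_le _ _).trans ?_
  have h3 : 4 / n ≤ 4 / k := by gcongr
  have h4 : 2 / n + 2 / n = 4 / n := by ring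
  exact (add_le_add h1 h2).trans (by linarith)

lemma norm_dirPath {p q : Eu N} {τ : ℝ} (h : 0 < ‖(1 - τ) • p + τ • q‖) :
    ‖dirPath p q τ‖ = 1 := by
  rw [dirPath, norm_smul, norm_inv, norm_norm, inv_mul_cancel₀ h.ne']

/-- Directions in the half space `x·e > 0` can be joined without coming close to the origin. -/
lemma le_norm_segment {p q e : Eu N} (hp : ‖p‖ = 1) (hq : ‖q‖ = 1) (he : ‖e‖ = 1) {b : ℝ}
    (hb1 : b ≤ 1) (hpb : b ≤ ⟪p, e⟫) (hqe : 0 ≤ ⟪q, e⟫) {τ : ℝ}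
    (hτ : τ ∈ Icc (0:ℝ) 1) : b / 4 ≤ ‖(1 - τ) • p + τ • q‖ := by
  by_cases hb0 : b < 0
  · linarith [norm_nonneg ((1 - τ) • p + τ • q)]
  push Not at hb0
  rcases le_total τ (3 / 4) with h | h
  · have h1 := real_inner_le_norm ((1 - τ) • p + τ • q) e
    rw [he, mul_one, inner_add_left, inner_smul_left, inner_smul_left] at h1
    simp only [conj_trivial] at h1
    have h2 : (1 - τ) * b ≤ (1 - τ) * ⟪p, e⟫ := mul_le_mul_of_nonneg_left hpb (by linarith)
    have h3 := mul_nonneg hτ.1 hqe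
    nlinarith
  · have h1 := norm_sub_norm_le (τ • q) (-((1 - τ) • p))
    rw [norm_neg, norm_smul, norm_smul, hp, hq, Real.norm_of_nonneg hτ.1,
      Real.norm_of_nonneg (by linarith [hτ.2]), sub_neg_eq_add, add_comm (τ • q)] at h1
    linarith

lemma annulus_g_nonneg {m S Z : ℝ} (hS : 0 < S) (hZ : Z ∈ Icc 0 S) :
    0 ≤ (1 - Real.exp (-m * Z)) - (1 - Real.exp (-m * S)) / S * Z := by
  have h := convexOn_exp.2 (mem_univ (0:ℝ)) (mem_univ (-m * S))
    (show 0 ≤ 1 - Z / S by rw [sub_nonneg, div_le_one hS]; exact hZ.2)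
    (div_nonneg hZ.1 hS.le) (by ring)
  simp only [smul_eq_mul, mul_zero, zero_add, Real.exp_zero, mul_one] at h
  have h1 : Z / S * (-m * S) = -m * Z := by field_simp
  rw [h1] at h
  have h2 : (1 - Real.exp (-m * S)) / S * Z = Z / S - Z / S * Real.exp (-m * S) := by ring
  rw [h2]; linarith

/-- The annulus supersolution is dominated by the parabola `(R - ρ) (ρ - r)`. -/
lemma annulus_g_le {r R m β c₀ S ρ : ℝ} (hr : 0 ≤ r) (hm : 0 ≤ m) (hβ : 0 < β) (hc₀ : 0 < c₀)
    (hS : 0 < S) (hSdef : S = R ^ 2 - r ^ 2) (hβdef : β = (1 - Real.exp (-m * S)) / S)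
    (hρr : r ≤ ρ) (hρR : ρ ≤ R) :
    S / (c₀ * (β + m) * (4 * R ^ 2)) *
      (c₀ * ((1 - Real.exp (-m * (ρ ^ 2 - r ^ 2))) - β * (ρ ^ 2 - r ^ 2))) ≤
      (R - ρ) * (ρ - r) := by
  have hR : 0 < R := by nlinarith
  set A := ρ ^ 2 - r ^ 2 with hA
  set D := R ^ 2 - ρ ^ 2 with hD
  set G := c₀ * ((1 - Real.exp (-m * A)) - β * A) with hG
  have hA0 : 0 ≤ A := by rw [hA]; nlinarith
  have hD0 : 0 ≤ D := by rw [hD]; nlinarith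
  have hAD : S = A + D := by rw [hSdef, hA, hD]; ring
  -- `G` is bounded by a multiple of the distance to either end of the interval
  have hG1 : G ≤ c₀ * (m * A) := by
    refine mul_le_mul_of_nonneg_left ?_ hc₀.le
    have h3 := Real.add_one_le_exp (-m * A)
    have h4 := mul_nonneg hβ.le hA0
    linarith
  have hG2 : G ≤ c₀ * (β * D) := by
    refine mul_le_mul_of_nonneg_left ?_ hc₀.le
    have h3 : β * S = 1 - Real.exp (-m * S) := by rw [hβdef]; field_simp
    have h4 : Real.exp (-m * S) ≤ Real.exp (-m * A) :=
      Real.exp_le_exp.2 (by nlinarith)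
    have h5 : β * D = β * S - β * A := by rw [hAD]; ring
    rw [h5, h3]; linarith
  have h3 : S * G ≤ c₀ * (β + m) * (A * D) := by
    have h4 := mul_le_mul_of_nonneg_left hG1 hD0
    have h5 := mul_le_mul_of_nonneg_left hG2 hA0
    rw [hAD]
    linarith
  have h4 : A * D ≤ (4 * R ^ 2) * ((R - ρ) * (ρ - r)) := by
    have h5 : A = (ρ - r) * (ρ + r) := by rw [hA]; ring
    have h6 : D = (R - ρ) * (R + ρ) := by rw [hD]; ring
    have h7 : (ρ + r) * (R + ρ) ≤ (2 * R) * (2 * R) := by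
      apply mul_le_mul <;> linarith
    have h8 := mul_le_mul_of_nonneg_left h7
      (mul_nonneg (sub_nonneg.2 hρR) (sub_nonneg.2 hρr))
    rw [h5, h6]
    linarith
  rw [div_mul_eq_mul_div, div_le_iff₀ (by positivity)]
  have h5 := mul_le_mul_of_nonneg_left h4 (by positivity : 0 ≤ c₀ * (β + m))
  linarith

set_option maxHeartbeats 1000000 in
lemma exists_barrierData_annulus {r R : ℝ} (hr : 0 < r) (hrR : r < R) :
    ∃ g g1 g2, BarrierData {x : Eu N | r < ‖x‖ ∧ ‖x‖ < R} R g g1 g2 := by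
  set B := {x : Eu N | r < ‖x‖ ∧ ‖x‖ < R} with hB
  have hR : 0 < R := hr.trans hrR
  have hBo : IsOpen B :=
    (isOpen_lt continuous_const continuous_norm).inter (isOpen_lt continuous_norm continuous_const)
  have hcl : ∀ x ∈ closure B, r ≤ ‖x‖ ∧ ‖x‖ ≤ R := by
    have : IsClosed {x : Eu N | r ≤ ‖x‖ ∧ ‖x‖ ≤ R} :=
      (isClosed_le continuous_const continuous_norm).inter
        (isClosed_le continuous_norm continuous_const)
    exact fun x hx => closure_minimal (show B ⊆ {x : Eu N | r ≤ ‖x‖ ∧ ‖x‖ ≤ R} from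
      fun y hy => ⟨hy.1.le, hy.2.le⟩) this hx
  have hfr : ∀ x ∈ frontier B, ‖x‖ = r ∨ ‖x‖ = R := by
    intro x hx
    rw [hBo.frontier_eq] at hx
    obtain ⟨h1, h2⟩ := hcl x hx.1
    by_contra h
    push Not at h
    exact hx.2 ⟨lt_of_le_of_ne h1 (Ne.symm h.1), lt_of_le_of_ne h2 h.2⟩
  have hN : (0:ℝ) < 2 * N + 4 := by positivity
  set S := R ^ 2 - r ^ 2 with hSdef
  have hS : 0 < S := by nlinarith
  set m : ℝ := (N + 2) / (2 * r ^ 2) with hm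
  have hm0 : 0 < m := by positivity
  have hm' : 4 * r ^ 2 * m = 2 * N + 4 := by rw [hm]; field_simp; ring
  set β := (1 - Real.exp (-m * S)) / S with hβdef
  have hβ : 0 < β := by
    refine div_pos ?_ hS
    have : Real.exp (-m * S) < 1 := Real.exp_lt_one_iff.2 (by nlinarith)
    linarith
  set c₀ := 1 / (β * (2 * N + 4)) with hc₀def
  have hc₀ : 0 < c₀ := by positivity
  have hexp : ∀ y : ℝ, HasDerivAt (fun y => Real.exp (-m * (y - r ^ 2)))
      (Real.exp (-m * (y - r ^ 2)) * -m) y := by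
    intro y
    have := (((hasDerivAt_id y).sub_const (r ^ 2)).const_mul (-m)).exp
    exact this.congr_deriv (by simp)
  have hZ : ∀ x ∈ closure B, ‖x‖ ^ 2 - r ^ 2 ∈ Icc 0 S := by
    intro x hx
    obtain ⟨h1, h2⟩ := hcl x hx
    constructor <;> nlinarith
  refine ⟨fun y => c₀ * ((1 - Real.exp (-m * (y - r ^ 2))) - β * (y - r ^ 2)),
    fun y => c₀ * (m * Real.exp (-m * (y - r ^ 2)) - β),
    fun y => c₀ * (-m ^ 2 * Real.exp (-m * (y - r ^ 2))),
    ⟨hBo, hR, fun x hx => (hcl x hx).2, ?_, ?_, ?_, ?_, ?_⟩⟩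
  · exact fun x hx => mul_nonneg hc₀.le (annulus_g_nonneg hS (hZ x hx))
  · intro y
    have := (((hexp y).const_sub 1).sub
      (((hasDerivAt_id y).sub_const (r ^ 2)).const_mul β)).const_mul c₀
    exact this.congr_deriv (by ring)
  · intro y
    have := (((hexp y).const_mul m).sub_const β).const_mul c₀
    exact this.congr_deriv (by ring)
  · intro x hx
    have hxr : r ^ 2 ≤ ‖x‖ ^ 2 := by have := hx.1; gcongr
    set E := Real.exp (-m * (‖x‖ ^ 2 - r ^ 2))
    have hE : 0 < E := Real.exp_pos _
    have h1 : c₀ * β * (2 * N + 4) = 1 := by rw [hc₀def]; field_simp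
    have h2 : 0 ≤ c₀ * m * E * (4 * ‖x‖ ^ 2 * m - (2 * N + 4)) := by
      refine mul_nonneg (by positivity) ?_
      rw [← hm']
      nlinarith
    nlinarith
  · intro x₀ hx₀ ρ₁ hρ₁ a₀ ha₀
    set ρ := min ρ₁ (min (R - ‖x₀‖) (‖x₀‖ - r)) with hρdef
    have hρ : 0 < ρ := lt_min hρ₁ (lt_min (by linarith [hx₀.2]) (by linarith [hx₀.1]))
    have hρR : ρ ≤ R - ‖x₀‖ := (min_le_right _ _).trans (min_le_left _ _)
    have hρr : ρ ≤ ‖x₀‖ - r := (min_le_right _ _).trans (min_le_right _ _)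
    set b := min (a₀ / R) 1 with hbdef
    have hb : 0 < b := lt_min (by positivity) one_pos
    refine ⟨ρ, R + R * (4 / (b / 4)), ρ, S / (c₀ * (β + m) * (4 * R ^ 2)), min_le_left _ _,
      by positivity, hρ, by positivity, ?_⟩
    intro e he hex x hx hxe
    have hx₀n : 0 < ‖x₀‖ := hr.trans hx₀.1
    have hxn : 0 < ‖x‖ := hr.trans hx.1
    set p := ‖x₀‖⁻¹ • x₀ with hpdef
    set q := ‖x‖⁻¹ • x with hqdef
    have hp : ‖p‖ = 1 := by rw [hpdef, norm_smul, norm_inv, norm_norm, inv_mul_cancel₀ hx₀n.ne']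
    have hq : ‖q‖ = 1 := by rw [hqdef, norm_smul, norm_inv, norm_norm, inv_mul_cancel₀ hxn.ne']
    have hpe : b ≤ ⟪p, e⟫ := by
      rw [hpdef, inner_smul_left, conj_trivial, inv_mul_eq_div]
      refine (min_le_left _ _).trans ?_
      have := hx₀.2.le
      have := ha₀.le.trans hex
      gcongr
    have hqe : 0 ≤ ⟪q, e⟫ := by
      rw [hqdef, inner_smul_left, conj_trivial]; positivity
    have hlow : ∀ τ ∈ Icc (0:ℝ) 1, b / 4 ≤ ‖(1 - τ) • p + τ • q‖ := fun τ hτ =>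
      le_norm_segment hp hq he (min_le_right _ _) hpe hqe hτ
    have hb4 : 0 < b / 4 := by positivity
    have hdir1 : ∀ τ ∈ Icc (0:ℝ) 1, ‖dirPath p q τ‖ = 1 := fun τ hτ =>
      norm_dirPath (hb4.trans_le (hlow τ hτ))
    have hex' : ∀ τ : ℝ, ∃ v, τ ∈ Icc (0:ℝ) 1 →
        HasDerivAt (dirPath p q) v τ ∧ ‖v‖ ≤ 4 / (b / 4) := by
      intro τ
      by_cases hτ : τ ∈ Icc (0:ℝ) 1
      · obtain ⟨v, hv⟩ := dirPath_hasDerivAt p q τ hb4 hp hq (hlow τ hτ)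
        exact ⟨v, fun _ => hv⟩
      · exact ⟨0, fun h => absurd h hτ⟩
    choose v hv using hex'
    set M : ℝ → ℝ := fun τ => (1 - τ) * ‖x₀‖ + τ * ((R + r) / 2) with hM
    have hMd : ∀ τ, HasDerivAt M ((R + r) / 2 - ‖x₀‖) τ := by
      intro τ
      have := (((hasDerivAt_id τ).const_sub 1).mul_const ‖x₀‖).add
        ((hasDerivAt_id τ).mul_const ((R + r) / 2))
      exact this.congr_deriv (by ring)
    have hM0 : ∀ τ ∈ Icc (0:ℝ) 1, 0 ≤ M τ := fun τ hτ =>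
      add_nonneg (mul_nonneg (by linarith [hτ.2]) hx₀n.le) (mul_nonneg hτ.1 (by linarith))
    have hMR : ∀ τ ∈ Icc (0:ℝ) 1, M τ ≤ R := by
      intro τ hτ
      have h1 : (1 - τ) * ‖x₀‖ ≤ (1 - τ) * R :=
        mul_le_mul_of_nonneg_left hx₀.2.le (by linarith [hτ.2])
      have h2 : τ * ((R + r) / 2) ≤ τ * R := mul_le_mul_of_nonneg_left (by linarith) hτ.1
      simp only [hM]; linarith
    refine ⟨fun τ => M τ • dirPath p q τ,
      fun τ => M τ • v τ + ((R + r) / 2 - ‖x₀‖) • dirPath p q τ,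
      fun τ => (1 - τ) * ρ + τ * ((R - r) / 2),
      fun _ => (R - r) / 2 - ρ, ⟨?_, ?_, ?_, ?_, ?_, ?_, ?_, ?_⟩, ?_, ?_, ?_⟩
    · intro τ hτ
      exact (hMd τ).smul (hv τ hτ).1
    · intro τ _
      have := (((hasDerivAt_id τ).const_sub 1).mul_const ρ).add
        ((hasDerivAt_id τ).mul_const ((R - r) / 2))
      exact this.congr_deriv (by ring)
    · intro τ hτ
      refine (norm_add_le _ _).trans ?_
      rw [norm_smul, norm_smul, hdir1 τ hτ, mul_one, Real.norm_of_nonneg (hM0 τ hτ), add_comm]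
      refine add_le_add ?_ (mul_le_mul (hMR τ hτ) (hv τ hτ).2 (norm_nonneg _) hR.le)
      rw [Real.norm_eq_abs, abs_le]
      constructor <;> linarith [hx₀.1, hx₀.2]
    · intro τ _
      have : 0 ≤ R * (4 / (b / 4)) := by positivity
      rw [abs_le]
      constructor <;> linarith
    · intro τ hτ
      nlinarith [hτ.1, hτ.2]
    · intro τ hτ
      nlinarith [hτ.1, hτ.2]
    · intro τ hτ
      rw [inner_smul_left, conj_trivial, dirPath, inner_smul_left, conj_trivial, inner_add_left,
        inner_smul_left p, inner_smul_left q, conj_trivial, conj_trivial]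
      have h1 : 0 ≤ 1 - τ := by linarith [hτ.2]
      have h2 := hτ.1
      have h3 := hM0 τ hτ
      have h4 : 0 ≤ ⟪p, e⟫ := hb.le.trans hpe
      exact mul_nonneg h3 (mul_nonneg (inv_nonneg.2 (norm_nonneg _))
        (add_nonneg (mul_nonneg h1 h4) (mul_nonneg h2 hqe)))
    · intro τ hτ y hy
      have hn : ‖M τ • dirPath p q τ‖ = M τ := by
        rw [norm_smul, hdir1 τ hτ, mul_one, Real.norm_of_nonneg (hM0 τ hτ)]
      have h1 := norm_sub_norm_le y (M τ • dirPath p q τ)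
      have h2 := norm_sub_norm_le (M τ • dirPath p q τ) y
      rw [norm_sub_rev, hn] at h2
      rw [hn] at h1
      have h3 : (1 - τ) * ρ ≤ (1 - τ) * (R - ‖x₀‖) :=
        mul_le_mul_of_nonneg_left hρR (by linarith [hτ.2])
      have h4 : (1 - τ) * ρ ≤ (1 - τ) * (‖x₀‖ - r) :=
        mul_le_mul_of_nonneg_left hρr (by linarith [hτ.2])
      simp only [hM] at h1 h2 ⊢
      rcases hfr y hy with h | h <;> rw [h] at h1 h2 <;> linarith
    · have h0 : M 0 • dirPath p q 0 = ‖x₀‖ • p := by simp [hM, dirPath, hp]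
      simp only [h0]
      rw [hpdef, smul_smul, mul_inv_cancel₀ hx₀n.ne', one_smul]
    · simp
    · have h1 : x - M 1 • dirPath p q 1 = (‖x‖ - (R + r) / 2) • q := by
        have : x = ‖x‖ • q := by rw [hqdef, smul_smul, mul_inv_cancel₀ hxn.ne', one_smul]
        rw [sub_smul, ← this]
        simp [hM, dirPath, hq]
      simp only [h1, norm_smul, hq, mul_one, Real.norm_eq_abs, sq_abs]
      have h2 : ((1 - 1) * ρ + 1 * ((R - r) / 2)) ^ 2 - (‖x‖ - (R + r) / 2) ^ 2 =
          (R - ‖x‖) * (‖x‖ - r) := by ring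
      rw [h2]
      exact annulus_g_le hr.le hm0.le hβ hc₀ hS hSdef hβdef hx.1.le hx.2.le

lemma IsRadialDomain.exists_barrierData {B : Set (Eu N)} (hB : IsRadialDomain B) :
    ∃ R g g1 g2, BarrierData B R g g1 g2 := by
  rcases hB with ⟨R, hR, rfl⟩ | ⟨r, R, hr, hrR, rfl⟩
  · exact ⟨_, _, _, _, barrierData_ball hR⟩
  · obtain ⟨g, g1, g2, h⟩ := exists_barrierData_annulus (N := N) hr hrR
    exact ⟨_, _, _, _, h⟩

/-! ### Reflections -/

lemma reflHyp_eq_reflection {e : Eu N} (he : ‖e‖ = 1) (x : Eu N) :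
    reflHyp e x = (ℝ ∙ e)ᗮ.reflection x := by
  rw [Submodule.reflection_orthogonal_apply, Submodule.reflection_singleton_apply, he, reflHyp,
    real_inner_comm]
  simp only [RCLike.ofReal_real_eq_id, id, one_pow, div_one]
  module

lemma norm_reflHyp {e : Eu N} (he : ‖e‖ = 1) (x : Eu N) : ‖reflHyp e x‖ = ‖x‖ := by
  rw [reflHyp_eq_reflection he, LinearIsometryEquiv.norm_map]

lemma reflHyp_reflHyp {e : Eu N} (he : ‖e‖ = 1) (x : Eu N) : reflHyp e (reflHyp e x) = x := by
  rw [reflHyp_eq_reflection he, reflHyp_eq_reflection he, Submodule.reflection_reflection]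

lemma continuous_reflHyp : Continuous fun p : Eu N × Eu N => reflHyp p.1 p.2 := by
  unfold reflHyp
  fun_prop

lemma continuous_reflHyp_right (e : Eu N) : Continuous (reflHyp e) := by
  unfold reflHyp
  fun_prop

lemma inner_reflHyp {e : Eu N} (he : ‖e‖ = 1) (x : Eu N) : ⟪reflHyp e x, e⟫ = -⟪x, e⟫ := by
  rw [reflHyp, inner_sub_left, inner_smul_left, real_inner_self_eq_norm_sq, he, conj_trivial]
  ring

lemma reflHyp_of_inner_eq_zero {e x : Eu N} (h : ⟪x, e⟫ = 0) : reflHyp e x = x := by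
  simp [reflHyp, h]

lemma IsRadialDomain.mem_of_norm_eq {B : Set (Eu N)} (hB : IsRadialDomain B) {x y : Eu N}
    (hx : x ∈ B) (h : ‖y‖ = ‖x‖) : y ∈ B := by
  rcases hB with ⟨R, hR, rfl⟩ | ⟨r, R, hr, hrR, rfl⟩
  · simpa [h] using hx
  · simpa [h] using hx

lemma IsRadialDomain.refl_mem {B : Set (Eu N)} (hB : IsRadialDomain B) {e x : Eu N}
    (he : ‖e‖ = 1) (hx : x ∈ B) : reflHyp e x ∈ B :=
  hB.mem_of_norm_eq hx (norm_reflHyp he x)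

lemma IsRadialDomain.refl_mem_closure {B : Set (Eu N)} (hB : IsRadialDomain B) {e x : Eu N}
    (he : ‖e‖ = 1) (hx : x ∈ closure B) : reflHyp e x ∈ closure B :=
  map_mem_closure (continuous_reflHyp_right e) hx fun _ hy => hB.refl_mem he hy

lemma IsRadialDomain.refl_mem_frontier {B : Set (Eu N)} (hB : IsRadialDomain B) (hBo : IsOpen B)
    {e x : Eu N} (he : ‖e‖ = 1) (hx : x ∈ frontier B) : reflHyp e x ∈ frontier B := by
  rw [hBo.frontier_eq] at hx ⊢
  exact ⟨hB.refl_mem_closure he hx.1, fun h => hx.2 <| by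
    simpa [reflHyp_reflHyp he] using hB.refl_mem he h⟩

lemma norm_reflHyp_sub_le {e e' : Eu N} (he : ‖e‖ = 1) (he' : ‖e'‖ = 1) (x : Eu N) :
    ‖reflHyp e' x - reflHyp e x‖ ≤ 4 * ‖x‖ * ‖e' - e‖ := by
  have h : reflHyp e' x - reflHyp e x =
      -((2 * ⟪x, e'⟫) • (e' - e) + (2 * ⟪x, e' - e⟫) • e) := by
    rw [reflHyp, reflHyp, inner_sub_right]
    module
  rw [h, norm_neg]
  refine (norm_add_le _ _).trans ?_
  rw [norm_smul, norm_smul, he, mul_one, norm_mul, norm_mul, Real.norm_eq_abs ⟪x, e'⟫,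
    Real.norm_eq_abs ⟪x, e' - e⟫, Real.norm_of_nonneg zero_le_two]
  have h1 := abs_real_inner_le_norm x e'
  have h2 := abs_real_inner_le_norm x (e' - e)
  rw [he', mul_one] at h1
  have h3 := mul_le_mul_of_nonneg_right h1 (norm_nonneg (e' - e))
  linarith

/-- If `H(e)` separates `x` from `e`, while `H(e')` does not separate `x` from `e'`, then `σ_{e'}`
hardly moves `x`. -/
lemma norm_reflHyp_sub_self_le {e e' : Eu N} (he' : ‖e'‖ = 1) {x : Eu N}
    (h : ⟪x, e⟫ ≤ 0) (h' : 0 ≤ ⟪x, e'⟫) : ‖reflHyp e' x - x‖ ≤ 2 * ‖x‖ * ‖e' - e‖ := by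
  have h1 : reflHyp e' x - x = -((2 * ⟪x, e'⟫) • e') := by rw [reflHyp]; abel
  rw [h1, norm_neg, norm_smul, he', mul_one, Real.norm_of_nonneg (by positivity)]
  have h2 := real_inner_le_norm x (e' - e)
  rw [inner_sub_right] at h2
  linarith

/-! ### The equation for the reflected difference -/

lemma hasLap_comp_clm {B : Set (Eu N)} (hB : IsOpen B) (T : Eu N →L[ℝ] Eu N) {v : Eu N → ℝ}
    {D : Eu N → (Eu N →L[ℝ] ℝ)} {D2 : Eu N →L[ℝ] Eu N →L[ℝ] ℝ} {x : Eu N} (hx : T x ∈ B)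
    (hv : ∀ y ∈ B, HasFDerivAt v (D y) y) (hD : HasFDerivAt D D2 (T x)) :
    HasLap (fun y => v (T y)) x
      (∑ i, D2 (T (EuclideanSpace.single i 1)) (T (EuclideanSpace.single i 1))) := by
  have hline : ∀ (i : Fin N) (s : ℝ), HasDerivAt
      (fun s : ℝ => T (x + s • EuclideanSpace.single i 1)) (T (EuclideanSpace.single i 1)) s := by
    intro i s
    have := ((hasDerivAt_id s).smul_const (EuclideanSpace.single i 1 : Eu N)).const_add x
    have := T.hasFDerivAt.comp_hasDerivAt s this
    exact this.congr_deriv (by simp)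
  refine ⟨fun i s => D (T (x + s • EuclideanSpace.single i 1)) (T (EuclideanSpace.single i 1)),
    _, fun i => ⟨?_, ?_⟩, rfl⟩
  · have hc : ContinuousAt (fun s : ℝ => T (x + s • EuclideanSpace.single i 1)) 0 :=
      (hline i 0).continuousAt
    have hmem : B ∈ nhds (T (x + (0:ℝ) • EuclideanSpace.single i 1)) := by
      simpa using hB.mem_nhds hx
    filter_upwards [hc hmem] with s hs
    exact (hv _ hs).comp_hasDerivAt s (hline i s)
  · have h0 : HasFDerivAt D D2 (T (x + (0:ℝ) • EuclideanSpace.single i 1)) := by simpa using hD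
    have h1 := h0.comp_hasDerivAt (0:ℝ) (hline i 0)
    have h2 := h1.clm_apply (hasDerivAt_const (0:ℝ) (T (EuclideanSpace.single i 1)))
    exact h2.congr_deriv (by simp)

lemma sum_single (e : Eu N) : ∑ i, e i • (EuclideanSpace.single i 1 : Eu N) = e := by
  ext j
  simp [Pi.single_apply]

/-- The Laplacian is invariant under reflections. -/
lemma sum_reflHyp_reflHyp {e : Eu N} (he : ‖e‖ = 1) (D2 : Eu N →L[ℝ] Eu N →L[ℝ] ℝ) :
    ∑ i, D2 (reflHyp e (EuclideanSpace.single i 1)) (reflHyp e (EuclideanSpace.single i 1)) =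
      ∑ i, D2 (EuclideanSpace.single i 1) (EuclideanSpace.single i 1) := by
  have h1 : ∑ i, e i * D2 e (EuclideanSpace.single i 1) = D2 e e := by
    simpa [map_sum] using congrArg (D2 e) (sum_single e)
  have h2 : ∑ i, e i * D2 (EuclideanSpace.single i 1) e = D2 e e := by
    simpa [map_sum] using congrArg (D2.flip e) (sum_single e)
  have h3 : ∑ i, e i * e i = 1 := by rw [sum_mul_eq_inner, real_inner_self_eq_norm_sq, he]; norm_num
  have h4 : ∀ i, D2 (reflHyp e (EuclideanSpace.single i 1)) (reflHyp e (EuclideanSpace.single i 1)) =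
      D2 (EuclideanSpace.single i 1) (EuclideanSpace.single i 1)
        - 2 * (e i * D2 e (EuclideanSpace.single i 1))
        - 2 * (e i * D2 (EuclideanSpace.single i 1) e) + 4 * D2 e e * (e i * e i) := by
    intro i
    simp [reflHyp, EuclideanSpace.inner_single_left]
    ring
  simp only [h4, Finset.sum_add_distrib, Finset.sum_sub_distrib, ← Finset.mul_sum, h1, h2, h3]
  ring

/-- The reflected difference of a classical solution is a `ReflSol`. -/
lemma reflSol_of_solution {B : Set (Eu N)} (hB : IsRadialDomain B) (hBo : IsOpen B)
    {f : ℝ → ℝ → ℝ → ℝ} {u ut : Eu N → ℝ → ℝ} {Du : Eu N → ℝ → (Eu N →L[ℝ] ℝ)}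
    {D2u : Eu N → ℝ → (Eu N →L[ℝ] Eu N →L[ℝ] ℝ)} {K L : ℝ}
    (hlip : ∀ t ∈ Ici (0:ℝ), ∀ x ∈ B, ∀ u₁ ∈ Icc (-K) K, ∀ u₂ ∈ Icc (-K) K,
      |f t ‖x‖ u₁ - f t ‖x‖ u₂| ≤ L * |u₁ - u₂|)
    (hu_cont : ContinuousOn (fun p : Eu N × ℝ => u p.1 p.2) (closure B ×ˢ Ici 0))
    (hut : ∀ x ∈ B, ∀ t ∈ Ioi (0:ℝ), HasDerivAt (fun s => u x s) (ut x t) t)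
    (hDu : ∀ x ∈ B, ∀ t ∈ Ioi (0:ℝ), HasFDerivAt (fun y => u y t) (Du x t) x)
    (hD2u : ∀ x ∈ B, ∀ t ∈ Ioi (0:ℝ), HasFDerivAt (fun y => Du y t) (D2u x t) x)
    (hPDE : ∀ x ∈ B, ∀ t ∈ Ioi (0:ℝ),
      ut x t = (∑ i, D2u x t (EuclideanSpace.single i 1) (EuclideanSpace.single i 1))
        + f t ‖x‖ (u x t))
    (hbc : ∀ x ∈ frontier B, ∀ t ∈ Ioi (0:ℝ), u x t = 0)
    (hK : ∀ t ∈ Ici (0:ℝ), ∀ x ∈ closure B, |u x t| ≤ K)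
    {e : Eu N} (he : ‖e‖ = 1) :
    ReflSol B e L fun x t => u x t - u (reflHyp e x) t := by
  refine ⟨?_, ?_, ?_, ?_⟩
  · refine hu_cont.sub (hu_cont.comp (f := fun p : Eu N × ℝ => (reflHyp e p.1, p.2)) ?_ ?_)
    · exact (((continuous_reflHyp_right e).comp continuous_fst).prodMk continuous_snd).continuousOn
    · exact fun p hp => ⟨hB.refl_mem_closure he hp.1, hp.2⟩
  · intro x hx t ht
    rw [hbc x hx t ht, hbc _ (hB.refl_mem_frontier hBo he hx) t ht, sub_self]
  · intro x hx t
    rw [reflHyp_of_inner_eq_zero hx, sub_self]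
  · intro x hx t ht
    have hσ := hB.refl_mem he hx
    have hT : ∀ y, ((ℝ ∙ e)ᗮ.reflection : Eu N →L[ℝ] Eu N) y = reflHyp e y := fun y =>
      (reflHyp_eq_reflection he y).symm
    have hlap := hasLap_comp_clm (x := x) hBo ((ℝ ∙ e)ᗮ.reflection : Eu N →L[ℝ] Eu N)
      (by rw [hT]; exact hσ) (fun y hy => hDu y hy t ht) (by rw [hT]; exact hD2u _ hσ t ht)
    simp only [hT] at hlap
    rw [sum_reflHyp_reflHyp he] at hlap
    refine ⟨_, _, (hut x hx t ht).sub (hut _ hσ t ht),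
      (hasLap_comp_clm hBo (ContinuousLinearMap.id ℝ (Eu N)) hx (fun y hy => hDu y hy t ht)
        (hD2u x hx t ht)).sub hlap, ?_⟩
    · rw [hPDE x hx t ht, hPDE _ hσ t ht, norm_reflHyp he]
      simp only [ContinuousLinearMap.id_apply]
      have h := hlip t (mem_Ici.2 (le_of_lt ht)) x hx (u x t)
        (abs_le.1 (hK t (mem_Ici.2 (le_of_lt ht)) x (subset_closure hx)))
        (u (reflHyp e x) t)
        (abs_le.1 (hK t (mem_Ici.2 (le_of_lt ht)) _ (subset_closure hσ)))
      convert h using 2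
      ring

/-! ### Reflection inequalities are open in the direction -/

lemma ReflSol.nonneg_of_nonneg {B : Set (Eu N)} (hB : IsOpen B) (hBc : IsCompact (closure B))
    {e : Eu N} {L : ℝ} {w : Eu N → ℝ → ℝ} (hw : ReflSol B e L w) {a : ℝ} (ha : 0 ≤ a)
    (h0 : ∀ x ∈ halfCl B e, 0 ≤ w x a) {t : ℝ} (ht : a ≤ t) : ∀ x ∈ halfCl B e, 0 ≤ w x t := by
  intro x hx
  refine weak_max_principle (L := L) (a := a) (b := t) (isCompact_halfCl hBc e)
    (isOpen_halfDom hB e) (halfDom_subset_halfCl B e) (h := w) ?_ h0 ?_ ?_ x hx t ⟨ht, le_rfl⟩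
  · exact hw.cont.mono (prod_mono (fun x hx => hx.1) (fun t ht => ha.trans ht.1))
  · intro x hx hx' t ht
    rw [hw.eq_zero hB hx hx' (ha.trans_lt ht.1)]
  · intro x hx t ht hneg
    obtain ⟨wt, l, h1, h2, h3⟩ := hw.pde x hx.1 t (ha.trans_lt ht.1)
    refine ⟨_, _, h1, h2, ?_⟩
    rw [abs_of_neg hneg] at h3
    linarith [(abs_le.1 h3).1]

/-- If a profile `z` satisfies the reflection inequality for `e` without being symmetric, then, as
soon as `u(·,t₀)` is close to `z`, the reflection inequality holds for `u(·,t)`, `t ≥ t₀ + 2`, and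
all directions near `e`. -/
lemma reflection_inequality_near {B : Set (Eu N)} (hB : IsRadialDomain B) {u : Eu N → ℝ → ℝ} {L : ℝ}
    (hL : 0 ≤ L)
    (hw : ∀ e : Eu N, ‖e‖ = 1 → ReflSol B e L fun x t => u x t - u (reflHyp e x) t)
    {z : Eu N → ℝ} (hz : ContinuousOn z (closure B)) {e : Eu N} (he : ‖e‖ = 1)
    (hze : ∀ x ∈ halfCl B e, z (reflHyp e x) ≤ z x) {x₀ : Eu N} (hx₀ : x₀ ∈ halfDom B e)
    (hne : z (reflHyp e x₀) ≠ z x₀) :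
    ∃ η > 0, ∀ t₀ ≥ 0, (∀ x ∈ closure B, |u x t₀ - z x| ≤ η) → ∀ e' : Eu N, ‖e'‖ = 1 →
      ‖e' - e‖ < η → ∀ t ≥ t₀ + 2, ∀ x ∈ halfCl B e', u (reflHyp e' x) t ≤ u x t := by
  obtain ⟨R, g, g1, g2, hb⟩ := hB.exists_barrierData
  have hR := hb.R_pos
  have hx₀c := halfDom_subset_halfCl B e hx₀
  set d := z x₀ - z (reflHyp e x₀) with hd
  have hd0 : 0 < d := sub_pos.2 (lt_of_le_of_ne (hze x₀ hx₀c) hne)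
  have ha₀ : 0 < ⟪x₀, e⟫ / 2 := half_pos hx₀.2
  obtain ⟨ρ₁, hρ₁, hnear⟩ : ∃ ρ₁ > 0, ∀ x ∈ closure B, ‖x - x₀‖ < ρ₁ →
      3 * d / 4 ≤ z x - z (reflHyp e x) := by
    have hc : ContinuousOn (fun x => z x - z (reflHyp e x)) (closure B) :=
      hz.sub (hz.comp (continuous_reflHyp_right e).continuousOn
        fun x hx => hB.refl_mem_closure he hx)
    obtain ⟨ρ₁, hρ₁, h⟩ := Metric.continuousOn_iff.1 hc x₀ hx₀c.1 (d / 4) (by positivity)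
    refine ⟨ρ₁, hρ₁, fun x hx hxx => ?_⟩
    have := h x hx (by rwa [dist_eq_norm])
    rw [Real.dist_eq, abs_lt] at this
    linarith [this.1]
  obtain ⟨ε, hε, hpos⟩ := positivity_after_two hb hx₀.1 hρ₁ ha₀ (half_pos hd0) hL
  set ε' := min (ε / 3) (d / 12) with hε'
  have hε'0 : 0 < ε' := lt_min (by positivity) (by positivity)
  have hε'1 : ε' ≤ ε / 3 := min_le_left _ _
  have hε'2 : ε' ≤ d / 12 := min_le_right _ _
  obtain ⟨θ, hθ, hunif⟩ := Metric.uniformContinuousOn_iff.1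
    (hb.isCompact.uniformContinuousOn_of_continuous hz) ε' hε'0
  set η := min ε' (min (θ / (4 * R)) (⟪x₀, e⟫ / 2 / R)) with hη
  have hη1 : η ≤ ε' := min_le_left _ _
  have hη2 : η ≤ θ / (4 * R) := (min_le_right _ _).trans (min_le_left _ _)
  have hη3 : η ≤ ⟪x₀, e⟫ / 2 / R := (min_le_right _ _).trans (min_le_right _ _)
  rw [le_div_iff₀ (by positivity)] at hη2 hη3
  refine ⟨η, lt_min hε'0 (lt_min (by positivity) (by positivity)), ?_⟩
  intro t₀ ht₀ hclose e' he' hee t ht x hx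
  -- the reflection inequality at time `t₀`, up to an error, with respect to `e'`
  have hθ' : ∀ x ∈ closure B, 4 * ‖x‖ * ‖e' - e‖ < θ := by
    intro x hx
    have := mul_le_mul_of_nonneg_right (hb.norm_le x hx) (norm_nonneg (e' - e))
    have := mul_lt_mul_of_pos_left hee hR
    linarith
  have hW : ∀ x ∈ closure B,
      z x - z (reflHyp e' x) - 2 * ε' ≤ u x t₀ - u (reflHyp e' x) t₀ := by
    intro x hx
    have h1 := abs_le.1 (hclose x hx)
    have h2 := abs_le.1 (hclose _ (hB.refl_mem_closure he' hx))
    linarith [h1.1, h2.2]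
  have hzz : ∀ x ∈ closure B, z x - z (reflHyp e x) - ε' ≤ z x - z (reflHyp e' x) := by
    intro x hx
    have := hunif _ (hB.refl_mem_closure he' hx) _ (hB.refl_mem_closure he hx)
      (by rw [dist_eq_norm]; exact (norm_reflHyp_sub_le he he' x).trans_lt (hθ' x hx))
    rw [Real.dist_eq, abs_lt] at this
    linarith [this.2]
  have h2 := hpos e' he' ?_ _ (hw e' he') t₀ ht₀ ?_ ?_
  · have := (hw e' he').nonneg_of_nonneg hb.open_B hb.isCompact (by linarith) h2 ht x hx
    linarith
  · have h1 := abs_real_inner_le_norm x₀ (e' - e)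
    rw [inner_sub_right, abs_le] at h1
    have := mul_le_mul_of_nonneg_right (hb.norm_le x₀ hx₀c.1) (norm_nonneg (e' - e))
    have := mul_lt_mul_of_pos_left hee hR
    linarith [h1.1]
  · intro x hx
    rcases le_total 0 ⟪x, e⟫ with h | h
    · linarith [hW x hx.1, hzz x hx.1, hze x ⟨hx.1, h⟩]
    · have := hunif _ (hB.refl_mem_closure he' hx.1) x hx.1 (by
        rw [dist_eq_norm]
        refine (norm_reflHyp_sub_self_le he' h hx.2).trans_lt ?_
        have := hθ' x hx.1
        have : 0 ≤ ‖x‖ * ‖e' - e‖ := by positivity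
        linarith)
      rw [Real.dist_eq, abs_lt] at this
      linarith [hW x hx.1, this.2]
  · intro x hx hxx
    linarith [hW x hx.1, hzz x hx.1, hnear x hx.1 hxx]

/-! ### The first moment of a profile -/

/-- The first moment `∫_B z(x) x dx`. Its scalar product with `e` detects the reflection asymmetry of
`z` with respect to `H(e)`. -/
def moment (B : Set (Eu N)) (z : Eu N → ℝ) : Eu N := ∫ x in B, z x • x

lemma integrableOn_of_continuousOn_closure {E : Type*} [NormedAddCommGroup E] {B : Set (Eu N)}
    (hBc : IsCompact (closure B)) {F : Eu N → E} (hF : ContinuousOn F (closure B)) :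
    MeasureTheory.IntegrableOn F B :=
  (hF.integrableOn_compact hBc).mono_set subset_closure

lemma two_mul_inner_moment {B : Set (Eu N)} (hB : IsRadialDomain B)
    (hBc : IsCompact (closure B)) {z : Eu N → ℝ} (hz : ContinuousOn z (closure B)) {e : Eu N}
    (he : ‖e‖ = 1) :
    2 * ⟪moment B z, e⟫ = ∫ x in B, (z x - z (reflHyp e x)) * ⟪x, e⟫ := by
  have hzσ : ContinuousOn (fun x => z (reflHyp e x)) (closure B) :=
    hz.comp (continuous_reflHyp_right e).continuousOn fun x hx => hB.refl_mem_closure he hx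
  have hin : ContinuousOn (fun x : Eu N => ⟪x, e⟫) (closure B) := by fun_prop
  have h1 : ⟪moment B z, e⟫ = ∫ x in B, z x * ⟪x, e⟫ := by
    have hz_int : MeasureTheory.IntegrableOn (fun x => z x • x) B :=
      integrableOn_of_continuousOn_closure hBc (hz.smul continuousOn_id)
    rw [real_inner_comm, moment, ← integral_inner hz_int]
    refine MeasureTheory.integral_congr_ae (Eventually.of_forall fun x => ?_)
    simp only [inner_smul_right, real_inner_comm]
  have hpre : reflHyp e ⁻¹' B = B := by
    ext x
    exact ⟨fun h => by simpa [reflHyp_reflHyp he] using hB.refl_mem he h, fun h => hB.refl_mem he h⟩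
  have h2 : ∫ x in B, z (reflHyp e x) * ⟪reflHyp e x, e⟫ = ∫ x in B, z x * ⟪x, e⟫ := by
    have hσ : reflHyp e = (ℝ ∙ e)ᗮ.reflection := funext (reflHyp_eq_reflection he)
    have := ((ℝ ∙ e)ᗮ.reflection.measurePreserving).setIntegral_preimage_emb
      ((ℝ ∙ e)ᗮ.reflection.toHomeomorph.measurableEmbedding) (fun x => z x * ⟪x, e⟫) B
    rw [← hσ, hpre] at this
    exact this
  have h3 : ∀ x, (z x - z (reflHyp e x)) * ⟪x, e⟫ =
      z x * ⟪x, e⟫ + z (reflHyp e x) * ⟪reflHyp e x, e⟫ := by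
    intro x; rw [inner_reflHyp he]; ring
  simp only [h3]
  rw [MeasureTheory.integral_add, h2, ← h1, two_mul]
  · exact integrableOn_of_continuousOn_closure hBc (hz.mul hin)
  · simp only [inner_reflHyp he]
    exact integrableOn_of_continuousOn_closure hBc (hzσ.mul hin.neg)

/-- The reflection inequality of `z` across `H(e)`, in a form that involves all of `B̄`. -/
lemma refl_diff_mul_inner_nonneg {B : Set (Eu N)} (hB : IsRadialDomain B) {z : Eu N → ℝ} {e : Eu N}
    (he : ‖e‖ = 1) (hze : ∀ x ∈ halfCl B e, z (reflHyp e x) ≤ z x) {x : Eu N}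
    (hx : x ∈ closure B) : 0 ≤ (z x - z (reflHyp e x)) * ⟪x, e⟫ := by
  rcases le_total 0 ⟪x, e⟫ with h | h
  · exact mul_nonneg (sub_nonneg.2 (hze x ⟨hx, h⟩)) h
  · refine mul_nonneg_of_nonpos_of_nonpos (sub_nonpos.2 ?_) h
    have := hze (reflHyp e x) ⟨hB.refl_mem_closure he hx, by rw [inner_reflHyp he]; linarith⟩
    rwa [reflHyp_reflHyp he] at this

lemma inner_moment_nonneg {B : Set (Eu N)} (hB : IsRadialDomain B) (hBo : IsOpen B)
    (hBc : IsCompact (closure B)) {z : Eu N → ℝ} (hz : ContinuousOn z (closure B)) {e : Eu N}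
    (he : ‖e‖ = 1) (hze : ∀ x ∈ halfCl B e, z (reflHyp e x) ≤ z x) : 0 ≤ ⟪moment B z, e⟫ := by
  have h := two_mul_inner_moment hB hBc hz he
  have := MeasureTheory.setIntegral_nonneg (μ := MeasureTheory.volume) hBo.measurableSet
    fun x hx => refl_diff_mul_inner_nonneg hB he hze (subset_closure hx)
  linarith

lemma symm_of_inner_moment_eq_zero {B : Set (Eu N)} (hB : IsRadialDomain B) (hBo : IsOpen B)
    (hBc : IsCompact (closure B)) {z : Eu N → ℝ} (hz : ContinuousOn z (closure B)) {e : Eu N}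
    (he : ‖e‖ = 1) (hze : ∀ x ∈ halfCl B e, z (reflHyp e x) ≤ z x)
    (h0 : ⟪moment B z, e⟫ = 0) : ∀ x ∈ closure B, z (reflHyp e x) = z x := by
  have hzσ : ContinuousOn (fun x => z (reflHyp e x)) (closure B) :=
    hz.comp (continuous_reflHyp_right e).continuousOn fun x hx => hB.refl_mem_closure he hx
  have hin : ContinuousOn (fun x : Eu N => ⟪x, e⟫) (closure B) := by fun_prop
  have hF : ContinuousOn (fun x => (z x - z (reflHyp e x)) * ⟪x, e⟫) (closure B) :=
    (hz.sub hzσ).mul hin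
  have h := two_mul_inner_moment hB hBc hz he
  rw [h0, mul_zero] at h
  have h1 := (MeasureTheory.setIntegral_eq_zero_iff_of_nonneg_ae
    ((MeasureTheory.ae_restrict_iff' hBo.measurableSet).2 (Eventually.of_forall
      fun x hx => refl_diff_mul_inner_nonneg hB he hze (subset_closure hx)))
    (integrableOn_of_continuousOn_closure hBc hF)).1 h.symm
  have h2 := MeasureTheory.Measure.eqOn_open_of_ae_eq h1 hBo (hF.mono subset_closure)
    continuousOn_const
  have h3 : EqOn (fun x => z (reflHyp e x)) z B := by
    intro x hx
    rcases mul_eq_zero.1 (h2 hx) with h | h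
    · exact (sub_eq_zero.1 h).symm
    · simp only [reflHyp_of_inner_eq_zero h]
  exact h3.of_subset_closure hzσ hz subset_closure subset_rfl

lemma inner_moment_eq_zero_of_symm {B : Set (Eu N)} (hB : IsRadialDomain B)
    (hBc : IsCompact (closure B)) {z : Eu N → ℝ} (hz : ContinuousOn z (closure B)) {e : Eu N}
    (he : ‖e‖ = 1) (h : ∀ x ∈ halfDom B e, z (reflHyp e x) = z x) : ⟪moment B z, e⟫ = 0 := by
  have h1 := two_mul_inner_moment hB hBc hz he
  rw [MeasureTheory.setIntegral_eq_zero_of_forall_eq_zero] at h1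
  · linarith
  · intro x hx
    rcases lt_trichotomy ⟪x, e⟫ 0 with h' | h' | h'
    · have := h (reflHyp e x) ⟨hB.refl_mem he hx, by rw [inner_reflHyp he]; linarith⟩
      rw [reflHyp_reflHyp he] at this
      rw [this, sub_self, zero_mul]
    · rw [h', mul_zero]
    · rw [h x ⟨hx, h'⟩, sub_self, zero_mul]

/-! ### Directions of reflection on the sphere -/

/-- The unit vectors `e` for which all functions in `Ω` satisfy the reflection inequality. -/
def reflDirs (B : Set (Eu N)) (Ω : Set (Eu N → ℝ)) : Set (Eu N) :=
  {e | ‖e‖ = 1 ∧ ∀ z ∈ Ω, ∀ x ∈ halfCl B e, z (reflHyp e x) ≤ z x}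

lemma isClosed_reflDirs {B : Set (Eu N)} (hB : IsRadialDomain B) {Ω : Set (Eu N → ℝ)}
    (hΩ : ∀ z ∈ Ω, ContinuousOn z (closure B)) : IsClosed (reflDirs B Ω) := by
  refine isClosed_of_closure_subset fun e he => ?_
  obtain ⟨a, ha, hae⟩ := mem_closure_iff_seq_limit.1 he
  have he1 : ‖e‖ = 1 :=
    tendsto_nhds_unique hae.norm (by simp [fun n => (ha n).1])
  refine ⟨he1, fun z hz x hx => ?_⟩
  rcases hx.2.eq_or_lt with h | h
  · rw [reflHyp_of_inner_eq_zero h.symm]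
  have h1 : Tendsto (fun n => reflHyp (a n) x) atTop (nhds (reflHyp e x)) :=
    (continuous_reflHyp.tendsto (e, x)).comp (hae.prodMk_nhds tendsto_const_nhds)
  have h2 : Tendsto (fun n => reflHyp (a n) x) atTop (nhdsWithin (reflHyp e x) (closure B)) :=
    tendsto_nhdsWithin_iff.2 ⟨h1, Eventually.of_forall fun n => hB.refl_mem_closure (ha n).1 hx.1⟩
  have h3 := ((hΩ z hz) _ (hB.refl_mem_closure he1 hx.1)).tendsto.comp h2
  have h4 : ∀ᶠ n in atTop, 0 < ⟪x, a n⟫ :=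
    ((tendsto_const_nhds (x := x)).inner hae).eventually_const_lt h
  refine le_of_tendsto h3 ?_
  filter_upwards [h4] with n hn
  exact (ha n).2 z hz x ⟨hx.1, hn.le⟩

lemma continuousAt_normalize {v : Eu N} (hv : v ≠ 0) :
    ContinuousAt (fun v : Eu N => ‖v‖⁻¹ • v) v :=
  (continuous_norm.continuousAt.inv₀ (norm_ne_zero_iff.2 hv)).smul continuousAt_id

lemma norm_normalize {v : Eu N} (hv : v ≠ 0) : ‖‖v‖⁻¹ • v‖ = 1 := by
  rw [norm_smul, norm_inv, norm_norm, inv_mul_cancel₀ (norm_ne_zero_iff.2 hv)]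

/-- If `e ∈ S` is interior to the set `A ⊆ S` of directions, then so is the ray through `e` to the
cone over `A`. -/
lemma cone_mem_nhds {A : Set (Eu N)} {v : Eu N} (hv : v ≠ 0) {η : ℝ} (hη : 0 < η)
    (h : ∀ e : Eu N, ‖e‖ = 1 → ‖e - ‖v‖⁻¹ • v‖ < η → e ∈ A) :
    {w : Eu N | ‖w‖⁻¹ • w ∈ A} ∈ nhds v := by
  have h1 := continuousAt_normalize hv (ball_mem_nhds _ hη)
  filter_upwards [h1, isOpen_ne.mem_nhds hv] with w hw hw0
  exact h _ (norm_normalize hw0) (by simpa [dist_eq_norm] using hw)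

/-- A closed set of directions which is open at each of its points in the open hemisphere around `V`
and contains a neighborhood of some direction of the closed hemisphere contains the whole closed
hemisphere, because the open hemisphere is connected. -/
lemma hemisphere_subset {A : Set (Eu N)} (hA : IsClosed A) {V : Eu N} (hV : V ≠ 0)
    (hopen : ∀ e ∈ A, ‖e‖ = 1 → 0 < ⟪V, e⟫ →
      ∃ η > 0, ∀ e' : Eu N, ‖e'‖ = 1 → ‖e' - e‖ < η → e' ∈ A)
    {e₀ : Eu N} (he₀ : ‖e₀‖ = 1) (hV₀ : 0 ≤ ⟪V, e₀⟫) {η₀ : ℝ} (hη₀ : 0 < η₀)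
    (h₀ : ∀ e : Eu N, ‖e‖ = 1 → ‖e - e₀‖ < η₀ → e ∈ A) :
    ∀ e : Eu N, ‖e‖ = 1 → 0 ≤ ⟪V, e⟫ → e ∈ A := by
  set A' : Set (Eu N) := {w : Eu N | ‖w‖⁻¹ • w ∈ A} with hA'
  set C : Set (Eu N) := {v | 0 < ⟪V, v⟫} with hC
  have hCne : ∀ v ∈ C, v ≠ 0 := by
    rintro v hv rfl
    simp [hC] at hv
  have hVV : 0 < ⟪V, V⟫ := real_inner_self_pos.2 hV
  -- every direction of the closed hemisphere is a limit of directions in the open one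
  have hlim : ∀ e : Eu N, 0 ≤ ⟪V, e⟫ →
      Tendsto (fun s : ℝ => e + s • V) (nhdsWithin 0 (Ioi 0)) (nhds e) ∧
        ∀ᶠ s in nhdsWithin (0:ℝ) (Ioi 0), e + s • V ∈ C := by
    intro e he
    constructor
    · have : Continuous fun s : ℝ => e + s • V := by fun_prop
      simpa using (this.tendsto 0).mono_left nhdsWithin_le_nhds
    · filter_upwards [self_mem_nhdsWithin] with s hs
      simp only [hC, mem_ofPred_eq, inner_add_right, inner_smul_right]
      have := mul_pos (mem_Ioi.1 hs) hVV
      linarith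
  have hCpre : IsPreconnected C := by
    refine Convex.isPreconnected ?_
    intro v hv w hw a b ha hb hab
    simp only [hC, mem_ofPred_eq, inner_add_right, inner_smul_right] at *
    rcases ha.eq_or_lt with rfl | ha
    · simp at hab; subst hab; simpa using hw
    · exact add_pos_of_pos_of_nonneg (mul_pos ha hv) (mul_nonneg hb hw.le)
  have hsub : C ⊆ interior A' := by
    refine hCpre.subset_of_closure_inter_subset isOpen_interior ?_ ?_
    · have he₀0 : e₀ ≠ 0 := by rintro rfl; simp at he₀
      have h1 : A' ∈ nhds e₀ := cone_mem_nhds he₀0 hη₀ (by simpa [he₀] using h₀)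
      have h2 : interior A' ∈ nhds e₀ := interior_mem_nhds.2 h1
      obtain ⟨s, hs1, hs2⟩ := (((hlim e₀ hV₀).1.eventually_mem h2).and (hlim e₀ hV₀).2).exists
      exact ⟨_, hs2, hs1⟩
    · rintro v ⟨hv, hvC⟩
      have hv0 := hCne v hvC
      have h1 : ‖v‖⁻¹ • v ∈ A := by
        have : v ∈ closure A' := closure_mono interior_subset hv
        have := (continuousAt_normalize hv0).continuousWithinAt.mem_closure this
          (show MapsTo (fun v : Eu N => ‖v‖⁻¹ • v) A' A from fun w hw => hw)
        rwa [hA.closure_eq] at this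
      obtain ⟨η, hη, h2⟩ := hopen _ h1 (norm_normalize hv0) (by
        rw [inner_smul_right]
        exact mul_pos (inv_pos.2 (norm_pos_iff.2 hv0)) hvC)
      exact mem_interior_iff_mem_nhds.2 (cone_mem_nhds hv0 hη h2)
  intro e he hVe
  have he0 : e ≠ 0 := by rintro rfl; simp at he
  obtain ⟨h1, h2⟩ := hlim e hVe
  have h3 := (continuousAt_normalize he0).tendsto.comp h1
  simp only [he, inv_one, one_smul] at h3
  refine hA.mem_of_tendsto h3 ?_
  filter_upwards [h2] with s hs
  exact (interior_subset (hsub hs) : e + s • V ∈ A')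

lemma reflHyp_neg (e x : Eu N) : reflHyp (-e) x = reflHyp e x := by
  simp [reflHyp]

lemma reflHyp_conj {b : Eu N} (hb : ‖b‖ = 1) (e x : Eu N) :
    reflHyp (reflHyp b e) x = reflHyp b (reflHyp e (reflHyp b x)) := by
  have h1 : ⟪x, reflHyp b e⟫ = ⟪reflHyp b x, e⟫ := by
    simp only [reflHyp, inner_sub_left, inner_sub_right, inner_smul_left, inner_smul_right,
      conj_trivial]
    rw [real_inner_comm e b]; ring
  have h2 : ∀ (y : Eu N) (c : ℝ), reflHyp b (y - c • e) = reflHyp b y - c • reflHyp b e := by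
    intro y c
    simp only [reflHyp, inner_sub_left, inner_smul_left, conj_trivial]
    module
  rw [reflHyp, h1, show reflHyp e (reflHyp b x) = reflHyp b x - (2 * ⟪reflHyp b x, e⟫) • e from rfl,
    h2, reflHyp_reflHyp hb]

/-- A symmetric set of directions that contains a neighborhood of `e₀` in `S`, and contains `σ_b(e₀)`
whenever it contains `b`, is the whole sphere: up to sign `e` is `σ_b(e₀)` for a direction `b`
bisecting the angle between `e` and `e₀`, and repeated bisection leads into the neighborhood. -/
lemma all_directions_of_near {G : Set (Eu N)} (hneg : ∀ e, -e ∈ G → e ∈ G)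
    {e₀ : Eu N} (he₀ : ‖e₀‖ = 1)
    (hconj : ∀ b : Eu N, ‖b‖ = 1 → b ∈ G → reflHyp b e₀ ∈ G) {η : ℝ} (hη : 0 < η)
    (hnear : ∀ e : Eu N, ‖e‖ = 1 → ‖e - e₀‖ < η → e ∈ G) : ∀ e : Eu N, ‖e‖ = 1 → e ∈ G := by
  have hind : ∀ n : ℕ, ∀ e : Eu N, ‖e‖ = 1 → 0 ≤ ⟪e, e₀⟫ →
      1 - ⟪e, e₀⟫ ≤ η ^ 2 / 4 * 2 ^ n → e ∈ G := by
    intro n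
    induction n with
    | zero =>
      intro e he _ h
      refine hnear e he (lt_of_pow_lt_pow_left₀ 2 hη.le ?_)
      rw [norm_sub_sq_real, he, he₀]
      have : 0 < η ^ 2 := by positivity
      linarith
    | succ n ih =>
      intro e he hc h
      set c := ⟪e, e₀⟫ with hcdef
      have hc1 : c ≤ 1 := by
        have := real_inner_le_norm e e₀
        rwa [he, he₀, one_mul] at this
      have hsq : ‖e + e₀‖ ^ 2 = 2 + 2 * c := by
        rw [norm_add_sq_real, he, he₀]; ring
      have hpos : 0 < ‖e + e₀‖ := by
        by_contra h0
        have : ‖e + e₀‖ = 0 := le_antisymm (not_lt.1 h0) (norm_nonneg _)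
        rw [this] at hsq
        linarith
      set m := ‖e + e₀‖ with hm
      set b := m⁻¹ • (e + e₀) with hb
      have hb1 : ‖b‖ = 1 := norm_normalize (norm_pos_iff.1 hpos)
      -- `β = cos (θ / 2)`, where `c = cos θ`
      have hβ : ⟪b, e₀⟫ = m / 2 := by
        rw [hb, inner_smul_left, conj_trivial, inner_add_left, real_inner_self_eq_norm_sq, he₀,
          ← hcdef]
        field_simp
        linarith
      have hm2 : m ≤ 2 := by nlinarith
      have hbG : b ∈ G := by
        refine ih b hb1 (by rw [hβ]; positivity) ?_
        rw [hβ]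
        rw [pow_succ (2:ℝ)] at h
        nlinarith
      have := hconj b hb1 hbG
      refine hneg e ?_
      have h1 : reflHyp b e₀ = -e := by
        rw [reflHyp, real_inner_comm, hβ, hb, smul_smul]
        have : 2 * (m / 2) * m⁻¹ = 1 := by field_simp
        rw [this, one_smul]; abel
      rwa [h1] at this
  have key : ∀ e : Eu N, ‖e‖ = 1 → 0 ≤ ⟪e, e₀⟫ → e ∈ G := by
    intro e he h
    obtain ⟨n, hn⟩ := pow_unbounded_of_one_lt (1 / (η ^ 2 / 4)) (one_lt_two (α := ℝ))
    refine hind n e he h ?_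
    rw [div_lt_iff₀ (by positivity)] at hn
    linarith
  intro e he
  rcases le_total 0 ⟪e, e₀⟫ with h | h
  · exact key e he h
  · exact hneg e (key (-e) (by rwa [norm_neg]) (by rw [inner_neg_left]; linarith))

/-- If the reflection inequalities hold for all directions in a closed hemisphere around `p`, then
foliated Schwarz symmetry with respect to `p` follows: two points of the same norm are exchanged by a
reflection. -/
lemma foliatedSchwarzOn_of_hemisphere {B : Set (Eu N)} {Ω : Set (Eu N → ℝ)} {p : Eu N}
    (h : ∀ e : Eu N, ‖e‖ = 1 → 0 ≤ ⟪p, e⟫ → e ∈ reflDirs B Ω) :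
    ∀ z ∈ Ω, FoliatedSchwarzOn (closure B) z p := by
  intro z hz x hx y _ hxy hyx
  rcases eq_or_ne x y with rfl | hne
  · exact le_rfl
  have hd : x - y ≠ 0 := sub_ne_zero.2 hne
  have hd' : 0 < ‖x - y‖ := norm_pos_iff.2 hd
  have hin : 2 * ⟪x, x - y⟫ = ‖x - y‖ ^ 2 := by
    rw [norm_sub_sq_real, inner_sub_right, real_inner_self_eq_norm_sq, hxy]; ring
  have hrefl : reflHyp (‖x - y‖⁻¹ • (x - y)) x = y := by
    rw [reflHyp, inner_smul_right, smul_smul]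
    have : 2 * (‖x - y‖⁻¹ * ⟪x, x - y⟫) * ‖x - y‖⁻¹ = 1 := by
      field_simp
      linarith
    rw [this, one_smul]; abel
  have hmem := h (‖x - y‖⁻¹ • (x - y)) (norm_normalize hd) (by
    rw [inner_smul_right, inner_sub_right, real_inner_comm, real_inner_comm y]
    exact mul_nonneg (inv_nonneg.2 hd'.le) (by linarith))
  have := hmem.2 z hz x ⟨hx, by
    rw [inner_smul_right]
    refine mul_nonneg (inv_nonneg.2 hd'.le) ?_
    have : 0 ≤ ‖x - y‖ ^ 2 := by positivity
    linarith⟩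
  rwa [hrefl] at this

/-- The symmetry axis: it is the direction of a nonzero first moment, if there is one. -/
lemma exists_axis {B : Set (Eu N)} (hB : IsRadialDomain B) {Ω : Set (Eu N → ℝ)}
    (hΩ : ∀ z ∈ Ω, ContinuousOn z (closure B))
    (hopen : ∀ e ∈ reflDirs B Ω, ∀ z ∈ Ω, ∀ x ∈ halfDom B e, z (reflHyp e x) ≠ z x →
      ∃ η > 0, ∀ e' : Eu N, ‖e'‖ = 1 → ‖e' - e‖ < η → e' ∈ reflDirs B Ω)
    {e₀ : Eu N} (he₀ : ‖e₀‖ = 1) {η₀ : ℝ} (hη₀ : 0 < η₀)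
    (h₀ : ∀ e : Eu N, ‖e‖ = 1 → ‖e - e₀‖ < η₀ → e ∈ reflDirs B Ω) :
    ∃ p : Eu N, ‖p‖ = 1 ∧ ∀ z ∈ Ω, FoliatedSchwarzOn (closure B) z p := by
  obtain ⟨R, g, g1, g2, hb⟩ := hB.exists_barrierData
  have hBo := hb.open_B
  have hBc := hb.isCompact
  have he₀A : e₀ ∈ reflDirs B Ω := h₀ e₀ he₀ (by simpa using hη₀)
  by_cases hV : ∃ z ∈ Ω, moment B z ≠ 0
  · obtain ⟨z, hz, hV⟩ := hV
    refine ⟨‖moment B z‖⁻¹ • moment B z, norm_normalize hV, foliatedSchwarzOn_of_hemisphere ?_⟩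
    intro e he hpe
    refine hemisphere_subset (isClosed_reflDirs hB hΩ) hV ?_ he₀
      (inner_moment_nonneg hB hBo hBc (hΩ z hz) he₀ (he₀A.2 z hz)) hη₀ h₀ e he ?_
    · intro e heA he hpos
      by_contra hcon
      have hsymm : ∀ x ∈ halfDom B e, z (reflHyp e x) = z x := by
        intro x hx
        by_contra hne
        exact hcon (hopen e heA z hz x hx hne)
      exact hpos.ne' (inner_moment_eq_zero_of_symm hB hBc (hΩ z hz) he hsymm)
    · rw [inner_smul_left, conj_trivial] at hpe
      exact nonneg_of_mul_nonneg_right hpe (inv_pos.2 (norm_pos_iff.2 hV))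
  · push Not at hV
    refine ⟨e₀, he₀, foliatedSchwarzOn_of_hemisphere ?_⟩
    have hG : ∀ e ∈ reflDirs B Ω, ∀ z ∈ Ω, ∀ x ∈ closure B, z (reflHyp e x) = z x :=
      fun e he z hz => symm_of_inner_moment_eq_zero hB hBo hBc (hΩ z hz) he.1 (he.2 z hz)
        (by rw [hV z hz, inner_zero_left])
    have hall := all_directions_of_near
      (G := {e | ∀ z ∈ Ω, ∀ x ∈ closure B, z (reflHyp e x) = z x})
      (fun e he => by simpa only [mem_ofPred_eq, reflHyp_neg] using he) he₀ ?_ hη₀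
      (fun e he hee => hG e (h₀ e he hee))
    · exact fun e he _ => ⟨he, fun z hz x hx => (hall e he z hz x hx.1).le⟩
    · intro b hb hbG z hz x hx
      rw [reflHyp_conj hb, hbG z hz _ (hB.refl_mem_closure he₀ (hB.refl_mem_closure hb hx)),
        hG e₀ he₀A z hz _ (hB.refl_mem_closure hb hx), hbG z hz x hx]

/-! ### Passing to the omega limit set -/

lemma mem_reflDirs_omegaLimitSet {B : Set (Eu N)} (hB : IsRadialDomain B) {u : Eu N → ℝ → ℝ}
    {e : Eu N} (he : ‖e‖ = 1) {T : ℝ}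
    (h : ∀ t ≥ T, ∀ x ∈ halfCl B e, u (reflHyp e x) t ≤ u x t) :
    e ∈ reflDirs B (omegaLimitSet B u) := by
  refine ⟨he, fun z hz x hx => ?_⟩
  obtain ⟨-, t, ht, hconv⟩ := hz
  refine le_of_forall_pos_le_add fun ε hε => ?_
  obtain ⟨n₀, hn₀⟩ := hconv (ε / 2) (half_pos hε)
  obtain ⟨n, hn, hTn⟩ := ((eventually_ge_atTop n₀).and (ht.eventually_ge_atTop T)).exists
  have h1 := abs_le.1 (hn₀ n hn x hx.1)
  have h2 := abs_le.1 (hn₀ n hn _ (hB.refl_mem_closure he hx.1))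
  linarith [h1.2, h2.1, h (t n) hTn x hx]

/-- The boundary condition, imposed for `t > 0`, extends to `t = 0`. -/
lemma boundary_value_zero {B : Set (Eu N)} {u : Eu N → ℝ → ℝ}
    (hu_cont : ContinuousOn (fun p : Eu N × ℝ => u p.1 p.2) (closure B ×ˢ Ici 0))
    (hbc : ∀ x ∈ frontier B, ∀ t ∈ Ioi (0:ℝ), u x t = 0) {x : Eu N} (hx : x ∈ frontier B) :
    u x 0 = 0 := by
  have hc : ContinuousOn (fun t => u x t) (Ici (0:ℝ)) :=
    hu_cont.comp (f := fun t : ℝ => (x, t)) (by fun_prop)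
      fun t ht => ⟨frontier_subset_closure hx, ht⟩
  have h1 : Tendsto (fun t => u x t) (nhdsWithin 0 (Ioi (0:ℝ))) (nhds (u x 0)) :=
    (hc 0 self_mem_Ici).mono_left (nhdsWithin_mono _ Ioi_subset_Ici_self)
  have h2 : Tendsto (fun t => u x t) (nhdsWithin 0 (Ioi (0:ℝ))) (nhds 0) :=
    tendsto_const_nhds.congr' (by
      filter_upwards [self_mem_nhdsWithin] with t ht
      exact (hbc x hx t ht).symm)
  exact tendsto_nhds_unique h1 h2

/-- Theorem `maintheo-simple` of the paper:
asymptotic foliated Schwarz symmetry for the semilinear problem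
`u_t = Δu + f(t,|x|,u)` in `B × (0,∞)`, `u = 0` on `∂B × (0,∞)`, `u(·,0) = u₀`,
under the reflection hypothesis (U1) on `u₀` and uniform boundedness (U2).

The solution is encoded by `u` together with its time derivative `ut`, spatial
differential `Du` and spatial second differential `D2u` on `B × (0,∞)`
(`C^{2,1}` regularity), continuity on `B̄ × [0,∞)`, and the Laplacian is
`Δu = ∑ i, D²u(eᵢ, eᵢ)`. -/
theorem asymptotic_foliated_schwarz_symmetry_semilinear
    (N : ℕ) (hN : 2 ≤ N)
    (B : Set (EuclideanSpace ℝ (Fin N))) (hB : IsRadialDomain B)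
    (f : ℝ → ℝ → ℝ → ℝ)
    (Iset : Set ℝ) (hI : Iset = closure ((fun x : EuclideanSpace ℝ (Fin N) => ‖x‖) '' B))
    -- (f1): continuity in (t,r) and local Lipschitz continuity in u, uniform in (t,r)
    (hf_cont : ∀ s : ℝ, ContinuousOn (fun p : ℝ × ℝ => f p.1 p.2 s) (Ici 0 ×ˢ Iset))
    (hf_lip : ∀ K > (0:ℝ), ∃ L > (0:ℝ), ∀ t ∈ Ici (0:ℝ), ∀ r ∈ Iset,
      ∀ u₁ ∈ Icc (-K) K, ∀ u₂ ∈ Icc (-K) K, |f t r u₁ - f t r u₂| ≤ L * |u₁ - u₂|)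
    -- (f2): boundedness of f(·,·,0)
    (hf_bdd : ∃ C : ℝ, ∀ t ∈ Ici (0:ℝ), ∀ r ∈ Iset, |f t r 0| ≤ C)
    -- the solution and its derivatives
    (u : EuclideanSpace ℝ (Fin N) → ℝ → ℝ)
    (u₀ : EuclideanSpace ℝ (Fin N) → ℝ)
    (ut : EuclideanSpace ℝ (Fin N) → ℝ → ℝ)
    (Du : EuclideanSpace ℝ (Fin N) → ℝ → (EuclideanSpace ℝ (Fin N) →L[ℝ] ℝ))
    (D2u : EuclideanSpace ℝ (Fin N) → ℝ →
      (EuclideanSpace ℝ (Fin N) →L[ℝ] EuclideanSpace ℝ (Fin N) →L[ℝ] ℝ))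
    -- u ∈ C(B̄ × [0,∞))
    (hu_cont : ContinuousOn (fun p : EuclideanSpace ℝ (Fin N) × ℝ => u p.1 p.2)
      (closure B ×ˢ Ici 0))
    -- u ∈ C^{2,1}(B × (0,∞)): the derivatives exist and are continuous there
    (hut : ∀ x ∈ B, ∀ t ∈ Ioi (0:ℝ), HasDerivAt (fun s => u x s) (ut x t) t)
    (hDu : ∀ x ∈ B, ∀ t ∈ Ioi (0:ℝ), HasFDerivAt (fun y => u y t) (Du x t) x)
    (hD2u : ∀ x ∈ B, ∀ t ∈ Ioi (0:ℝ), HasFDerivAt (fun y => Du y t) (D2u x t) x)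
    (hreg : ContinuousOn (fun p : EuclideanSpace ℝ (Fin N) × ℝ =>
      (ut p.1 p.2, Du p.1 p.2, D2u p.1 p.2)) (B ×ˢ Ioi 0))
    -- the equation u_t = Δu + f(t,|x|,u) in B × (0,∞)
    (hPDE : ∀ x ∈ B, ∀ t ∈ Ioi (0:ℝ),
      ut x t = (∑ i, D2u x t (EuclideanSpace.single i 1) (EuclideanSpace.single i 1))
        + f t ‖x‖ (u x t))
    -- the boundary condition u = 0 on ∂B × (0,∞)
    (hbc : ∀ x ∈ frontier B, ∀ t ∈ Ioi (0:ℝ), u x t = 0)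
    -- the initial condition u(·,0) = u₀
    (hinit : ∀ x ∈ closure B, u x 0 = u₀ x)
    -- (U1): reflection inequality for the initial profile
    (hU1 : ∃ e : EuclideanSpace ℝ (Fin N), ‖e‖ = 1 ∧
      (∀ x ∈ halfDom B e, u₀ (reflHyp e x) ≤ u₀ x) ∧
      (∃ x ∈ halfDom B e, u₀ (reflHyp e x) ≠ u₀ x))
    -- (U2): uniform boundedness
    (hU2 : ∃ C : ℝ, ∀ t ∈ Ici (0:ℝ), ∀ x ∈ closure B, |u x t| ≤ C) :
    ∃ p : EuclideanSpace ℝ (Fin N), ‖p‖ = 1 ∧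
      ∀ z ∈ omegaLimitSet B u, FoliatedSchwarzOn (closure B) z p := by
  obtain ⟨R, g, g1, g2, hb⟩ := hB.exists_barrierData
  have hBo := hb.open_B
  obtain ⟨C, hC⟩ := hU2
  obtain ⟨L, hL, hlip⟩ := hf_lip (max C 1) (lt_max_of_lt_right one_pos)
  have hw : ∀ e : Eu N, ‖e‖ = 1 → ReflSol B e L fun x t => u x t - u (reflHyp e x) t := by
    intro e he
    refine reflSol_of_solution hB hBo (K := max C 1) (fun t ht x hx => hlip t ht ‖x‖ ?_) hu_cont
      hut hDu hD2u hPDE hbc (fun t ht x hx => (hC t ht x hx).trans (le_max_left _ _)) he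
    rw [hI]
    exact subset_closure ⟨x, hx, rfl⟩
  obtain ⟨e₀, he₀, hrefl, x₀, hx₀, hne⟩ := hU1
  have hz₀ : ContinuousOn (fun x => u x 0) (closure B) :=
    hu_cont.comp (f := fun x : Eu N => (x, (0:ℝ))) (by fun_prop) fun x hx => ⟨hx, self_mem_Ici⟩
  have hrefl₀ : ∀ x ∈ halfCl B e₀, u (reflHyp e₀ x) 0 ≤ u x 0 := by
    intro x hx
    by_cases hxD : x ∈ halfDom B e₀
    · rw [hinit x hx.1, hinit _ (hB.refl_mem_closure he₀ hx.1)]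
      exact hrefl x hxD
    · rcases mem_frontier_or_inner_eq_zero hBo hx hxD with h | h
      · rw [boundary_value_zero hu_cont hbc h,
          boundary_value_zero hu_cont hbc (hB.refl_mem_frontier hBo he₀ h)]
      · rw [reflHyp_of_inner_eq_zero h]
  obtain ⟨η₀, hη₀, h₀⟩ := reflection_inequality_near hB hL.le hw hz₀ he₀ hrefl₀ hx₀ (by
    simp only [hinit x₀ (subset_closure hx₀.1),
      hinit _ (subset_closure (hB.refl_mem he₀ hx₀.1))]
    exact hne)
  refine exists_axis hB (fun z hz => hz.1) ?_ he₀ hη₀ fun e he hee =>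
    mem_reflDirs_omegaLimitSet hB he (h₀ 0 le_rfl (fun x _ => by simpa using hη₀.le) e he hee)
  intro e he z hz x hx hne
  obtain ⟨η, hη, h⟩ := reflection_inequality_near hB hL.le hw hz.1 he.1 (he.2 z hz) hx hne
  obtain ⟨-, t, ht, hconv⟩ := hz
  obtain ⟨n₀, hn₀⟩ := hconv η hη
  obtain ⟨n, hn, hTn⟩ := ((eventually_ge_atTop n₀).and (ht.eventually_ge_atTop 0)).exists
  exact ⟨η, hη, fun e' he' hee =>
    mem_reflDirs_omegaLimitSet hB he' (h (t n) hTn (hn₀ n hn) e' he' hee)⟩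

end
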